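/- Upper bound 4.506 on the random 3-SAT satisfiability threshold: for each positive integer n let m_n = ⌈4.506·n⌉. Then the probability that a uniformly random formula F : Fin m_n → (Fin n × Bool)³ is satisfiable tends to 0 as n → ∞. -/

import Mathlib

open Filter

/-! The proof is a weighted first moment argument. Among the satisfying assignments of a formula
take one that agrees with the majority sign of as many variables as possible. Then every variable
either has its majority value or occurs critically, that is, as the only true literal of some
clause; only variables of clauses with a repeated variable can fail this, and in a random formula
there are `o(n)` of those. It therefore suffices to count the assignments with this property, with
a penalty `η` for each exception.

The plain first moment of these assignments is dominated by formulae with atypical occurrence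
numbers. So weight a formula by the product over its variables of `c s q`, where `s` and `q` are
the numbers of positive and negative occurrences. The logarithm of the weight concentrates at `n`
times its mean `M` under a pair of Poisson variables, and thus the probability is at most
`exp (-M * n)` times the weighted first moment, up to `o(1)`.

Given the truth values of all literal slots, the weighted count factors over variables and over
clauses; bounding the coefficients of the resulting generating functions at a saddle point gives
growth at most `exp (R * n)` for the weighted first moment. The saddle point depends on the
fraction `p` of falsified slots, and is chosen for each of finitely many intervals covering
`[0, 1]`. With `c` a power of `129 / 128` found by numerical optimisation, rational arithmetic
shows `R < M`. -/

open Finset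
open scoped Nat

namespace RandomSAT

section TypeCount

variable {ι κ T : Type*} [Fintype ι] [DecidableEq κ] [DecidableEq T]

/-- The occurrence profile of a labelling `f` of typed slots: `typeCount τ f v t` is the number
of slots of type `t` that carry the label `v`. -/
def typeCount (τ : ι → T) (f : ι → κ) (v : κ) (t : T) : ℕ :=
  #{i | f i = v ∧ τ i = t}

lemma card_fiber_eq_typeCount (τ : ι → T) (f : ι → κ) (p : κ × T) :
    Fintype.card {i // (f i, τ i) = p} = typeCount τ f p.1 p.2 := by
  rw [Fintype.card_subtype, typeCount]
  simp only [Prod.ext_iff]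

lemma sum_typeCount [Fintype κ] (τ : ι → T) (f : ι → κ) (t : T) :
    ∑ v, typeCount τ f v t = #{i | τ i = t} := by
  rw [card_eq_sum_card_fiberwise (f := f) (t := univ) (by simp)]
  refine sum_congr rfl fun v _ => ?_
  rw [filter_filter, typeCount]
  simp only [and_comm]

lemma exists_perm_of_typeCount_eq {τ : ι → T} {f g : ι → κ} (h : typeCount τ f = typeCount τ g) :
    ∃ π : Equiv.Perm ι, f ∘ π = g ∧ τ ∘ π = τ := by
  have hcard (p : κ × T) :
      Nonempty ({i // (g i, τ i) = p} ≃ {i // (f i, τ i) = p}) := by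
    rw [← Fintype.card_eq, card_fiber_eq_typeCount, card_fiber_eq_typeCount, h]
  let e (p : κ × T) := (hcard p).some
  let π : Equiv.Perm ι := (Equiv.sigmaFiberEquiv fun i => (g i, τ i)).symm.trans
    ((Equiv.sigmaCongrRight e).trans (Equiv.sigmaFiberEquiv fun i => (f i, τ i)))
  have hπ (i : ι) : (f (π i), τ (π i)) = (g i, τ i) := (e (g i, τ i) ⟨i, rfl⟩).2
  exact ⟨π, funext fun i => congrArg Prod.fst (hπ i), funext fun i => congrArg Prod.snd (hπ i)⟩

variable [DecidableEq ι] [Fintype κ] [Fintype T]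

-- Composing a fixed labelling with the type-preserving permutations reaches every labelling of the
-- same profile, so labellings times stabilizer inject into the type-preserving permutations.
lemma card_typeCount_eq_mul_prod_factorial_le (τ : ι → T) (d : κ → T → ℕ) :
    #{f : ι → κ | typeCount τ f = d} * ∏ v, ∏ t, (d v t)! ≤ ∏ t, (#{i | τ i = t})! := by
  rcases ({f : ι → κ | typeCount τ f = d} : Finset _).eq_empty_or_nonempty with h | ⟨f₀, hf₀⟩
  · simp [h]
  replace hf₀ : typeCount τ f₀ = d := (mem_filter.mp hf₀).2
  have hstab : Fintype.card {g : Equiv.Perm ι // (fun i => (f₀ i, τ i)) ∘ g = fun i => (f₀ i, τ i)}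
      = ∏ v, ∏ t, (d v t)! := by
    rw [DomMulAct.stabilizer_card, Fintype.prod_prod_type]
    simp only [card_fiber_eq_typeCount, hf₀]
  have hperm : Fintype.card {g : Equiv.Perm ι // τ ∘ g = τ} = ∏ t, (#{i | τ i = t})! := by
    rw [DomMulAct.stabilizer_card]
    simp only [Fintype.card_subtype]
  have hex (f : {f : ι → κ // f ∈ ({f | typeCount τ f = d} : Finset _)}) :=
    exists_perm_of_typeCount_eq (hf₀.trans (mem_filter.mp f.2).2.symm)
  choose π hπf hπτ using hex
  rw [← hstab, ← hperm, ← Fintype.card_coe, ← Fintype.card_prod]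
  have hfix (g : {g : Equiv.Perm ι // (fun i => (f₀ i, τ i)) ∘ g = fun i => (f₀ i, τ i)}) (i : ι) :
      f₀ (g.1 i) = f₀ i ∧ τ (g.1 i) = τ i := Prod.ext_iff.mp (congrFun g.2 i)
  refine Fintype.card_le_of_injective (fun q => ⟨q.2.1 * π q.1, funext fun i => ?_⟩) ?_
  · exact (hfix q.2 _).2.trans (congrFun (hπτ q.1) i)
  · rintro ⟨f, g⟩ ⟨f', g'⟩ heq
    replace heq : g.1 * π f = g'.1 * π f' := congrArg Subtype.val heq
    have hlabel (q) (h : {g : Equiv.Perm ι // _}) (i : ι) : q.1 i = f₀ ((h.1 * π q) i) :=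
      (congrFun (hπf q) i).symm.trans (hfix h _).1.symm
    obtain rfl : f = f' := Subtype.ext <| funext fun i => by rw [hlabel f g, heq, ← hlabel]
    rw [Subtype.ext (mul_right_cancel heq)]

/-- The exponential generating function of the weights `W` of profiles with entries at most `N`,
at the point `x`. -/
noncomputable def truncatedEGF (W : (T → ℕ) → ℝ) (N : ℕ) (x : T → ℝ) : ℝ :=
  ∑ e ∈ Fintype.piFinset fun _ : T => range (N + 1), W e * ∏ t, x t ^ e t / (e t)!

lemma truncatedEGF_nonneg {W : (T → ℕ) → ℝ} (hW : 0 ≤ W) (N : ℕ) {x : T → ℝ}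
    (hx : ∀ t, 0 < x t) : 0 ≤ truncatedEGF W N x :=
  sum_nonneg fun e _ => mul_nonneg (hW e) <| prod_nonneg fun t _ =>
    div_nonneg (pow_nonneg (hx t).le _) (Nat.cast_nonneg _)

lemma card_typeCount_eq_mul_prod_le (τ : ι → T) (d : κ → T → ℕ) {W : (T → ℕ) → ℝ} (hW : 0 ≤ W)
    {x : T → ℝ} (hx : ∀ t, 0 < x t) :
    #{f : ι → κ | typeCount τ f = d} * ∏ v, W (d v) ≤
      (∏ t, (#{i | τ i = t})! / x t ^ #{i | τ i = t}) *
        ∏ v, (W (d v) * ∏ t, x t ^ d v t / (d v t)!) := by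
  have hW' : 0 ≤ ∏ v, W (d v) := prod_nonneg fun v _ => hW _
  rcases ({f : ι → κ | typeCount τ f = d} : Finset _).eq_empty_or_nonempty with h | ⟨f₀, hf₀⟩
  · have hnonneg : 0 ≤ (∏ t, (#{i | τ i = t})! / x t ^ #{i | τ i = t}) *
        ∏ v, (W (d v) * ∏ t, x t ^ d v t / (d v t)!) :=
      mul_nonneg (prod_nonneg fun t _ => div_nonneg (by positivity) (pow_nonneg (hx t).le _)) <|
        prod_nonneg fun v _ => mul_nonneg (hW _) <|
          prod_nonneg fun t _ => div_nonneg (pow_nonneg (hx t).le _) (by positivity)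
    simpa [h] using hnonneg
  have hpow : ∏ v, ∏ t, x t ^ d v t = ∏ t, x t ^ #{i | τ i = t} := by
    rw [Finset.prod_comm]
    simp only [prod_pow_eq_pow_sum, ← (mem_filter.mp hf₀).2, sum_typeCount]
  have hcard : (#{f : ι → κ | typeCount τ f = d} : ℝ) * ∏ v, ∏ t, ((d v t)! : ℝ) ≤
      ∏ t, ((#{i | τ i = t})! : ℝ) := mod_cast card_typeCount_eq_mul_prod_factorial_le τ d
  have hx' : 0 < ∏ t, x t ^ #{i | τ i = t} := prod_pos fun t _ => pow_pos (hx t) _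
  have hd : 0 < ∏ v, ∏ t, ((d v t)! : ℝ) := prod_pos fun v _ => prod_pos fun t _ => by positivity
  calc (#{f : ι → κ | typeCount τ f = d} : ℝ) * ∏ v, W (d v)
      ≤ (∏ t, ((#{i | τ i = t})! : ℝ)) / (∏ v, ∏ t, ((d v t)! : ℝ)) * ∏ v, W (d v) :=
        mul_le_mul_of_nonneg_right ((le_div_iff₀ hd).mpr hcard) hW'
    _ = _ := by
        simp only [prod_mul_distrib, prod_div_distrib, hpow]
        field_simp

theorem sum_prod_typeCount_le (τ : ι → T) {W : (T → ℕ) → ℝ} (hW : 0 ≤ W)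
    {x : T → ℝ} (hx : ∀ t, 0 < x t) :
    ∑ f : ι → κ, ∏ v, W (typeCount τ f v) ≤
      (∏ t, (#{i | τ i = t})! / x t ^ #{i | τ i = t}) *
        truncatedEGF W (Fintype.card ι) x ^ Fintype.card κ := by
  set profiles := Fintype.piFinset fun _ : κ =>
    Fintype.piFinset fun _ : T => range (Fintype.card ι + 1)
  have hmaps (f : ι → κ) (_ : f ∈ univ) : typeCount τ f ∈ profiles := by
    simp only [profiles, Fintype.mem_piFinset, mem_range]
    exact fun v t => Nat.lt_succ_of_le (card_le_univ _)
  calc ∑ f : ι → κ, ∏ v, W (typeCount τ f v)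
      = ∑ d ∈ profiles, #{f : ι → κ | typeCount τ f = d} * ∏ v, W (d v) := by
        rw [← sum_fiberwise_of_maps_to hmaps]
        refine sum_congr rfl fun d _ => ?_
        rw [← nsmul_eq_mul, ← sum_const]
        exact sum_congr rfl fun f hf => by rw [(mem_filter.mp hf).2]
    _ ≤ ∑ d ∈ profiles, (∏ t, (#{i | τ i = t})! / x t ^ #{i | τ i = t}) *
          ∏ v, (W (d v) * ∏ t, x t ^ d v t / (d v t)!) :=
        sum_le_sum fun d _ => card_typeCount_eq_mul_prod_le τ d hW hx
    _ = _ := by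
        rw [← mul_sum, ← prod_univ_sum (fun _ : κ => Fintype.piFinset fun _ : T =>
          range (Fintype.card ι + 1)) fun _ e => W e * ∏ t, x t ^ e t / (e t)!, prod_const,
          card_univ, truncatedEGF]

end TypeCount

section Factorial

lemma div_exp_one_pow_le_factorial (n : ℕ) : ((n : ℝ) / Real.exp 1) ^ n ≤ (n ! : ℝ) := by
  have h := Real.pow_div_factorial_le_exp (n : ℝ) n.cast_nonneg n
  rw [div_pow, ← Real.exp_nat_mul, mul_one]
  rw [div_le_iff₀ (by positivity)] at h ⊢
  linarith

lemma exp_one_mul_pow_le (n : ℕ) :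
    Real.exp 1 * (n : ℝ) ^ (n + 1) ≤ ((n : ℝ) + 1) ^ (n + 1) := by
  rcases n.eq_zero_or_pos with rfl | hn
  · simp
  have h : Real.exp (1 / (n + 1)) ≤ ((n : ℝ) + 1) / n := by
    have := Real.one_sub_le_exp_neg (1 / ((n : ℝ) + 1))
    rw [Real.exp_neg,
      show 1 - 1 / ((n : ℝ) + 1) = (((n : ℝ) + 1) / n)⁻¹ by field_simp; ring] at this
    exact (inv_le_inv₀ (by positivity) (Real.exp_pos _)).mp this
  have hpow := pow_le_pow_left₀ (Real.exp_pos _).le h (n + 1)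
  rwa [← Real.exp_nat_mul, div_pow, le_div_iff₀ (by positivity),
    show ((n + 1 : ℕ) : ℝ) * (1 / (n + 1)) = 1 by push_cast; field_simp] at hpow

lemma factorial_le_exp_mul_pow {n : ℕ} (hn : n ≠ 0) :
    (n ! : ℝ) ≤ Real.exp 1 * n * ((n : ℝ) / Real.exp 1) ^ n := by
  induction n, Nat.one_le_iff_ne_zero.mpr hn using Nat.le_induction with
  | base => simp
  | succ n _ ih =>
    calc ((n + 1)! : ℝ)
        = (n + 1) * (n ! : ℝ) := by push_cast [Nat.factorial_succ]; ring
      _ ≤ (n + 1) * (Real.exp 1 * n * ((n : ℝ) / Real.exp 1) ^ n) := by gcongr; exact ih (by omega)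
      _ = (n + 1) * (Real.exp 1 * (n : ℝ) ^ (n + 1)) / Real.exp 1 ^ n := by rw [div_pow]; ring
      _ ≤ (n + 1) * ((n : ℝ) + 1) ^ (n + 1) / Real.exp 1 ^ n := by
          gcongr; exact exp_one_mul_pow_le n
      _ = _ := by push_cast; rw [div_pow, pow_succ (Real.exp 1)]; field_simp

lemma factorial_le_exp_mul_succ_mul_pow (n : ℕ) :
    (n ! : ℝ) ≤ Real.exp 1 * (n + 1) * ((n : ℝ) / Real.exp 1) ^ n := by
  rcases eq_or_ne n 0 with rfl | hn
  · simp
  · exact (factorial_le_exp_mul_pow hn).trans (by gcongr; linarith)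

lemma factorial_mul_factorial_le (a b : ℕ) :
    (a ! * b ! : ℝ) ≤ (Real.exp 1 * (a + b + 1)) ^ 2 * (a + b)! *
      ((a / (a + b) : ℝ) ^ a * (1 - a / (a + b) : ℝ) ^ b) := by
  rcases Nat.eq_zero_or_pos (a + b) with h | h
  · obtain ⟨rfl, rfl⟩ : a = 0 ∧ b = 0 := by omega
    simp
  have hab : (0 : ℝ) < a + b := mod_cast h
  have hlower := div_exp_one_pow_le_factorial (a + b)
  rw [one_sub_div hab.ne', add_sub_cancel_left]
  push_cast at hlower
  calc (a ! * b ! : ℝ)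
      ≤ (Real.exp 1 * (a + 1) * ((a : ℝ) / Real.exp 1) ^ a) *
        (Real.exp 1 * (b + 1) * ((b : ℝ) / Real.exp 1) ^ b) := by
        gcongr <;> exact factorial_le_exp_mul_succ_mul_pow _
    _ ≤ (Real.exp 1 * (a + b + 1) * ((a : ℝ) / Real.exp 1) ^ a) *
        (Real.exp 1 * (a + b + 1) * ((b : ℝ) / Real.exp 1) ^ b) := by
        gcongr <;> simp
    _ = (Real.exp 1 * (a + b + 1)) ^ 2 * (((a : ℝ) + b) / Real.exp 1) ^ (a + b) *
        ((a / (a + b) : ℝ) ^ a * (b / (a + b) : ℝ) ^ b) := by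
        simp only [div_pow, pow_add]
        field_simp
    _ ≤ _ := by gcongr

lemma factorial_add_le {t : ℝ} (ht₀ : 0 < t) (ht₁ : t < 1) (a b : ℕ) :
    ((a + b)! : ℝ) ≤ a ! * b ! * (t⁻¹ ^ a * (1 - t)⁻¹ ^ b) := by
  have : 0 < 1 - t := sub_pos.mpr ht₁
  have hbinom : t ^ a * (1 - t) ^ b * ((a + b).choose a : ℝ) ≤ 1 := by
    have hsum := add_pow t (1 - t) (a + b)
    rw [add_sub_cancel, one_pow] at hsum
    refine le_of_le_of_eq ?_ hsum.symm
    simpa using single_le_sum (f := fun k => t ^ k * (1 - t) ^ (a + b - k) * ((a + b).choose k : ℝ))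
      (fun i _ => by positivity) (mem_range.mpr (by omega : a < a + b + 1))
  have hchoose : ((a + b).choose a : ℝ) * a ! * b ! = (a + b)! := by
    rw [Nat.choose_symm_add]
    exact_mod_cast Nat.add_choose_mul_factorial_mul_factorial a b
  rw [← hchoose, inv_pow, inv_pow, ← mul_inv, ← div_eq_mul_inv, le_div_iff₀ (by positivity)]
  calc _ = (t ^ a * (1 - t) ^ b * ((a + b).choose a : ℝ)) * (a ! * b !) := by ring
    _ ≤ 1 * (a ! * b !) := by gcongr
    _ = _ := one_mul _

-- `K` critical, `P` redundant and `N` falsified slots, `M` clauses without a critical slot.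
lemma factorial_slotTypes_le {m K M P N : ℕ} (hKM : K + M = m) (hKPN : K + P + N = 3 * m) {t : ℝ}
    (ht₀ : 0 < t) (ht₁ : t < 1) :
    (K ! * P ! * N ! : ℝ) ≤
      (Real.exp 1 * (3 * m + 1)) ^ 4 * (m ! * (2 * m)!) * ((1 - t)⁻¹ ^ 2) ^ m *
        ((K / m : ℝ) ^ K * ((1 - K / m) / t : ℝ) ^ M *
          ((N / (N + P) : ℝ) ^ N * (1 - N / (N + P) : ℝ) ^ P)) := by
  have hNP : N + P = M + 2 * m := by omega
  have hNP_le : (N : ℝ) + P ≤ 3 * m := mod_cast (by omega : N + P ≤ 3 * m)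
  have hKM' : (K : ℝ) + M = m := mod_cast hKM
  have hK : 0 ≤ 1 - (K / m : ℝ) :=
    sub_nonneg.mpr (div_le_one_of_le₀ (by exact_mod_cast hKM ▸ K.le_add_right M) m.cast_nonneg)
  have hN : 0 ≤ 1 - (N / (N + P) : ℝ) :=
    sub_nonneg.mpr (div_le_one_of_le₀ (by simp) (by positivity))
  have : 0 < 1 - t := sub_pos.mpr ht₁
  have hmodeK := factorial_mul_factorial_le K M
  have hmodeN := factorial_mul_factorial_le N P
  have hsplit := factorial_add_le ht₀ ht₁ M (2 * m)
  rw [hKM, hKM'] at hmodeK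
  rw [hNP] at hmodeN
  set pN := (N / (N + P) : ℝ) ^ N * (1 - N / (N + P) : ℝ) ^ P
  set pK := (K / m : ℝ) ^ K * (1 - K / m : ℝ) ^ M
  have : 0 ≤ pN := by positivity
  have : 0 ≤ pK := by positivity
  set E := Real.exp 1 * (3 * (m : ℝ) + 1)
  have hE {s : ℝ} (hs : s ≤ 3 * m) : Real.exp 1 * (s + 1) ≤ E :=
    mul_le_mul_of_nonneg_left (by linarith) (Real.exp_pos 1).le
  calc (K ! * P ! * N ! : ℝ)
      = K ! * (N ! * P !) := by ring
    _ ≤ K ! * (E ^ 2 * (M ! * (2 * m)! * (t⁻¹ ^ M * (1 - t)⁻¹ ^ (2 * m))) * pN) := by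
        refine mul_le_mul_of_nonneg_left (hmodeN.trans ?_) (by positivity)
        gcongr
        exact hE hNP_le
    _ = K ! * M ! * (E ^ 2 * (2 * m)! * (t⁻¹ ^ M * (1 - t)⁻¹ ^ (2 * m)) * pN) := by ring
    _ ≤ E ^ 2 * m ! * pK * (E ^ 2 * (2 * m)! * (t⁻¹ ^ M * (1 - t)⁻¹ ^ (2 * m)) * pN) := by
        refine mul_le_mul_of_nonneg_right (hmodeK.trans ?_) (by positivity)
        gcongr
        exact hE (by linarith)
    _ = _ := by
        rw [div_pow _ t, pow_mul]
        simp only [pK, div_eq_mul_inv, inv_pow]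
        ring

end Factorial

section Formula

variable {m n : ℕ}

/-- A 3-CNF formula, with the literals indexed by slots `(clause, position)`. -/
abbrev Formula (m n : ℕ) := Fin m × Fin 3 → Fin n × Bool

/-- A truth pattern: which of the slots hold a true literal. -/
abbrev Pattern (m : ℕ) := Fin m × Fin 3 → Bool

/-- The role of a slot in a truth pattern: it holds the only true literal of its clause, one of
several true literals, or a false literal. -/
inductive SlotType
  | critical
  | redundant
  | falsified
  deriving DecidableEq

open SlotType

instance : Fintype SlotType := ⟨{critical, redundant, falsified}, by rintro ⟨⟩ <;> decide⟩

/-- The role of position `j` in a clause with truth values `ρ`. -/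
def clauseType (ρ : Fin 3 → Bool) (j : Fin 3) : SlotType :=
  if ρ j then if ∀ j', ρ j' → j' = j then critical else redundant else falsified

/-- The role of a slot in a truth pattern of a formula. -/
def slotType (σ : Pattern m) (a : Fin m × Fin 3) : SlotType :=
  clauseType (fun j => σ (a.1, j)) a.2

/-- A pattern with a true literal in each clause. -/
def Pattern.IsSat (σ : Pattern m) : Prop := ∀ i, ∃ j, σ (i, j)

instance (σ : Pattern m) : Decidable σ.IsSat :=
  inferInstanceAs (Decidable (∀ i, ∃ j, σ (i, j)))

/-- The truth pattern of a formula under an assignment. -/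
def truthPattern (A : Fin n → Bool) (F : Formula m n) : Pattern m :=
  fun a => A (F a).1 = (F a).2

/-- The number of slots that hold the literal `(v, b)`. -/
def occ (F : Formula m n) (v : Fin n) (b : Bool) : ℕ := #{a | F a = (v, b)}

/-- The number of clauses in which a variable is repeated. -/
def numRepetitive (F : Formula m n) : ℕ :=
  #{i | ¬ Function.Injective fun j => (F (i, j)).1}

/-- The occurrence profile of a variable: how many of its slots have each role under `A`. -/
def profile (A : Fin n → Bool) (F : Formula m n) : Fin n → SlotType → ℕ :=
  typeCount (slotType (truthPattern A F)) fun a => (F a).1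

lemma univ_slotType : (univ : Finset SlotType) = {critical, redundant, falsified} := rfl

lemma prod_slotType {M : Type*} [CommMonoid M] (g : SlotType → M) :
    ∏ t, g t = g critical * g redundant * g falsified := by
  simp [univ_slotType, mul_assoc]

lemma slotType_eq_falsified {σ : Pattern m} {a : Fin m × Fin 3} :
    slotType σ a = falsified ↔ ¬ σ a := by
  unfold slotType clauseType; split_ifs <;> simp_all

lemma slotType_eq_critical {σ : Pattern m} {a : Fin m × Fin 3} :
    slotType σ a = critical ↔ σ a ∧ ∀ j, σ (a.1, j) → j = a.2 := by
  unfold slotType clauseType; split_ifs <;> simp_all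

lemma slotType_eq_redundant {σ : Pattern m} {a : Fin m × Fin 3} :
    slotType σ a = redundant ↔ σ a ∧ ¬ ∀ j, σ (a.1, j) → j = a.2 := by
  unfold slotType clauseType; split_ifs <;> simp_all

lemma fst_eq_and_truthPattern_iff {A : Fin n → Bool} {F : Formula m n} {v : Fin n}
    {a : Fin m × Fin 3} : (F a).1 = v ∧ truthPattern A F a ↔ F a = (v, A v) := by
  simp only [truthPattern, decide_eq_true_eq, Prod.ext_iff]
  grind

lemma fst_eq_and_not_truthPattern_iff {A : Fin n → Bool} {F : Formula m n} {v : Fin n}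
    {a : Fin m × Fin 3} : (F a).1 = v ∧ ¬ truthPattern A F a ↔ F a = (v, !A v) := by
  simp only [truthPattern, decide_eq_true_eq, Prod.ext_iff]
  grind

lemma profile_critical_add_redundant (A : Fin n → Bool) (F : Formula m n) (v : Fin n) :
    profile A F v critical + profile A F v redundant = occ F v (A v) := by
  simp only [profile, typeCount, occ, slotType_eq_critical, slotType_eq_redundant, ← and_assoc,
    fst_eq_and_truthPattern_iff, ← filter_filter, card_filter_add_card_filter_not]

lemma profile_falsified (A : Fin n → Bool) (F : Formula m n) (v : Fin n) :
    profile A F v falsified = occ F v (!A v) := by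
  simp only [profile, typeCount, occ, slotType_eq_falsified, fst_eq_and_not_truthPattern_iff]

/-- The sign in which a variable occurs at least as often as in the other one (`true` on ties). -/
def majoritySign (F : Formula m n) (v : Fin n) : Bool := occ F v false ≤ occ F v true

/-- A variable of value `b` and occurrence profile `e` is anchored if `b` is its majority sign or
it has a critical occurrence. The summand `b.toNat` lets the value `true` win the ties. -/
def IsAnchored (b : Bool) (e : SlotType → ℕ) : Prop :=
  e falsified < e critical + e redundant + b.toNat ∨ 0 < e critical

instance (b : Bool) (e : SlotType → ℕ) : Decidable (IsAnchored b e) :=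
  inferInstanceAs (Decidable (_ ∨ _))

lemma isAnchored_of_eq_majoritySign {A : Fin n → Bool} {F : Formula m n} {v : Fin n}
    (h : A v = majoritySign F v) : IsAnchored (A v) (profile A F v) := by
  left
  rw [profile_critical_add_redundant, profile_falsified]
  cases hv : A v <;> simp_all [majoritySign]

lemma exists_isSat_majority_maximal {F : Formula m n} (hF : ∃ A, (truthPattern A F).IsSat) :
    ∃ A, (truthPattern A F).IsSat ∧ ∀ v, A v ≠ majoritySign F v →
      ¬ (truthPattern (Function.update A v (!A v)) F).IsSat := by
  obtain ⟨A, hA, hmax⟩ := exists_max_image {A : Fin n → Bool | (truthPattern A F).IsSat}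
    (fun A => #{v | A v = majoritySign F v}) (by simpa [Finset.Nonempty] using hF)
  refine ⟨A, by simpa using hA, fun v hv hflip => (hmax _ (by simpa using hflip)).not_gt ?_⟩
  refine card_lt_card ((ssubset_iff_of_subset fun u hu => ?_).mpr ⟨v, ?_, by simpa using hv⟩)
  · have hu' : A u = majoritySign F u := by simpa using hu
    have huv : u ≠ v := by rintro rfl; exact hv hu'
    simpa [huv] using hu'
  · simpa using Bool.not_eq.mpr hv

lemma exists_repetitive_clause_of_not_isAnchored {A : Fin n → Bool} {F : Formula m n} {v : Fin n}
    (hA : (truthPattern A F).IsSat)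
    (hflip : ¬ (truthPattern (Function.update A v (!A v)) F).IsSat)
    (hv : ¬ IsAnchored (A v) (profile A F v)) :
    ∃ i, (¬ Function.Injective fun j => (F (i, j)).1) ∧
      ∀ j, truthPattern A F (i, j) → (F (i, j)).1 = v := by
  simp only [Pattern.IsSat, not_forall, not_exists] at hflip
  obtain ⟨i, hi⟩ := hflip
  have hvar (j) (hj : truthPattern A F (i, j)) : (F (i, j)).1 = v := by
    by_contra hne
    exact hi j (by simpa [truthPattern, Function.update_of_ne hne] using hj)
  obtain ⟨j, hj⟩ := hA i
  have hnot_critical : slotType (truthPattern A F) (i, j) ≠ critical := fun hcrit =>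
    hv <| Or.inr <| card_pos.mpr ⟨(i, j), by simp [hcrit, hvar j hj]⟩
  simp only [ne_eq, slotType_eq_critical, hj, true_and, not_forall] at hnot_critical
  obtain ⟨j', hj', hne⟩ := hnot_critical
  exact ⟨i, fun hinj => hne (hinj ((hvar j' hj').trans (hvar j hj).symm)), hvar⟩

lemma card_not_isAnchored_le {A : Fin n → Bool} {F : Formula m n} (hA : (truthPattern A F).IsSat)
    (hmax : ∀ v, A v ≠ majoritySign F v →
      ¬ (truthPattern (Function.update A v (!A v)) F).IsSat) :
    #{v | ¬ IsAnchored (A v) (profile A F v)} ≤ numRepetitive F := by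
  have hclause (v) (hv : ¬ IsAnchored (A v) (profile A F v)) :=
    exists_repetitive_clause_of_not_isAnchored hA
      (hmax v fun h => hv (isAnchored_of_eq_majoritySign h)) hv
  refine card_le_card_of_forall_subsingleton
    (fun v i => ∀ j, truthPattern A F (i, j) → (F (i, j)).1 = v) (fun v hv => ?_)
    fun i _ v hv u hu => ?_
  · simpa using hclause v (by simpa using hv)
  · obtain ⟨j, hj⟩ := hA i
    exact (hv.2 j hj).symm.trans (hu.2 j hj)

/-- The weight of a variable of value `b` and profile `e`: a function `c` of its numbers of true
and false occurrences, with a penalty `η` if the variable is not anchored. -/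
noncomputable def profileWeight (c : ℕ → ℕ → ℝ) (η : ℝ) (b : Bool) (e : SlotType → ℕ) : ℝ :=
  c (e critical + e redundant) (e falsified) * if IsAnchored b e then 1 else η

/-- The weight of a formula, a product over the variables that does not see any assignment. -/
noncomputable def formulaWeight (c : ℕ → ℕ → ℝ) (F : Formula m n) : ℝ :=
  ∏ v, c (occ F v true) (occ F v false)

lemma prod_profileWeight {c : ℕ → ℕ → ℝ} (hsymm : ∀ s q, c s q = c q s) (η : ℝ)
    (A : Fin n → Bool) (F : Formula m n) :
    ∏ v, profileWeight c η (A v) (profile A F v) =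
      formulaWeight c F * η ^ #{v | ¬ IsAnchored (A v) (profile A F v)} := by
  have hc (v) : c (occ F v (A v)) (occ F v (!A v)) = c (occ F v true) (occ F v false) := by
    cases A v
    · exact hsymm _ _
    · rfl
  simp only [profileWeight, profile_critical_add_redundant, profile_falsified, hc, prod_mul_distrib,
    prod_ite, prod_const_one, one_mul, prod_const, formulaWeight]

theorem exists_isSat_pow_numRepetitive_mul_formulaWeight_le {c : ℕ → ℕ → ℝ} (hc : ∀ s q, 0 ≤ c s q)
    (hsymm : ∀ s q, c s q = c q s) {η : ℝ} (hη₀ : 0 ≤ η) (hη₁ : η ≤ 1) {F : Formula m n}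
    (hF : ∃ A, (truthPattern A F).IsSat) :
    ∃ A, (truthPattern A F).IsSat ∧ η ^ numRepetitive F * formulaWeight c F ≤
      ∏ v, profileWeight c η (A v) (profile A F v) := by
  obtain ⟨A, hA, hmax⟩ := exists_isSat_majority_maximal hF
  refine ⟨A, hA, ?_⟩
  rw [prod_profileWeight hsymm, mul_comm]
  exact mul_le_mul_of_nonneg_left
    (pow_le_pow_of_le_one hη₀ hη₁ (card_not_isAnchored_le hA hmax)) (prod_nonneg fun v _ => hc _ _)

end Formula

open SlotType

section Clause

/-- The number of positions of a clause with truth values `ρ` that have the role `s`. -/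
def clauseTypeCount (ρ : Fin 3 → Bool) (s : SlotType) : ℕ := #{j | clauseType ρ j = s}

lemma clauseTypeCount_critical_le_one : ∀ ρ, clauseTypeCount ρ critical ≤ 1 := by decide

lemma sum_clauseTypeCount_of_satisfied {M : Type*} [AddCommMonoid M] (g : ℕ → ℕ → ℕ → M) :
    ∑ ρ : Fin 3 → Bool with ∃ j, ρ j,
      g (clauseTypeCount ρ critical) (clauseTypeCount ρ redundant) (clauseTypeCount ρ falsified) =
        3 • g 1 0 2 + 3 • g 0 2 1 + g 0 3 0 := by
  have hcounts : (univ.filter fun ρ : Fin 3 → Bool => ∃ j, ρ j).val.map (fun ρ =>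
      (clauseTypeCount ρ critical, clauseTypeCount ρ redundant, clauseTypeCount ρ falsified)) =
        3 • {(1, 0, 2)} + 3 • {(0, 2, 1)} + {(0, 3, 0)} := by decide
  have hsum := congrArg (fun s => (s.map fun k => g k.1 k.2.1 k.2.2).sum) hcounts
  simp only [Multiset.map_map, Multiset.map_add, Multiset.map_nsmul, Multiset.map_singleton,
    Multiset.sum_add, Multiset.sum_nsmul, Multiset.sum_singleton] at hsum
  exact hsum

variable {m n : ℕ}

lemma card_slotType_eq (σ : Pattern m) (s : SlotType) :
    #{a | slotType σ a = s} = ∑ i, clauseTypeCount (fun j => σ (i, j)) s := by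
  rw [card_filter, Fintype.sum_prod_type]
  refine sum_congr rfl fun i _ => ?_
  rw [clauseTypeCount, card_filter]
  rfl

lemma card_critical_le (σ : Pattern m) : #{a | slotType σ a = critical} ≤ m := by
  rw [card_slotType_eq]
  exact (sum_le_sum fun i _ => clauseTypeCount_critical_le_one _).trans (by simp)

lemma card_critical_add_redundant_add_falsified (σ : Pattern m) :
    #{a | slotType σ a = critical} + #{a | slotType σ a = redundant} +
      #{a | slotType σ a = falsified} = 3 * m := by
  have h := card_eq_sum_card_fiberwise (f := slotType σ) (s := univ) (t := univ) (by simp)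
  simp only [card_univ, Fintype.card_prod, Fintype.card_fin] at h
  rw [mul_comm, h, univ_slotType]
  simp [add_assoc]

/-- The factor that a clause with truth values `ρ` contributes to a product in which each critical
slot counts `a`, each clause without critical slot `b`, each redundant slot `g` and each falsified
slot `d`. -/
noncomputable def clauseFactor (a b g d : ℝ) (ρ : Fin 3 → Bool) : ℝ :=
  a ^ clauseTypeCount ρ critical * b ^ (1 - clauseTypeCount ρ critical) *
    (g ^ clauseTypeCount ρ redundant * d ^ clauseTypeCount ρ falsified)

lemma clauseFactor_nonneg {a b g d : ℝ} (ha : 0 ≤ a) (hb : 0 ≤ b) (hg : 0 ≤ g) (hd : 0 ≤ d)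
    (ρ : Fin 3 → Bool) : 0 ≤ clauseFactor a b g d ρ := by
  unfold clauseFactor; positivity

lemma sum_clauseFactor (a b g d : ℝ) :
    ∑ ρ with ∃ j, ρ j, clauseFactor a b g d ρ = a * (3 * d ^ 2) + b * (3 * g ^ 2 * d + g ^ 3) := by
  refine (sum_clauseTypeCount_of_satisfied
    fun K P N => a ^ K * b ^ (1 - K) * (g ^ P * d ^ N)).trans ?_
  simp only [nsmul_eq_mul]
  push_cast
  ring

lemma prod_clauseFactor (σ : Pattern m) (a b g d : ℝ) :
    ∏ i, clauseFactor a b g d (fun j => σ (i, j)) =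
      a ^ #{s | slotType σ s = critical} * b ^ (m - #{s | slotType σ s = critical}) *
        (g ^ #{s | slotType σ s = redundant} * d ^ #{s | slotType σ s = falsified}) := by
  have hcompl : m - #{s | slotType σ s = critical} =
      ∑ i : Fin m, (1 - clauseTypeCount (fun j => σ (i, j)) critical) := by
    rw [card_slotType_eq, sum_tsub_distrib _ fun i _ => clauseTypeCount_critical_le_one _]
    simp
  rw [hcompl]
  simp only [clauseFactor, card_slotType_eq, prod_mul_distrib, prod_pow_eq_pow_sum]

lemma sum_isSat_prod (h : (Fin 3 → Bool) → ℝ) :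
    ∑ σ : Pattern m with σ.IsSat, ∏ i, h (fun j => σ (i, j)) = (∑ ρ with ∃ j, ρ j, h ρ) ^ m := by
  have hpow := prod_univ_sum (fun _ : Fin m => univ.filter fun ρ : Fin 3 → Bool => ∃ j, ρ j)
    fun _ ρ => h ρ
  rw [prod_const, card_univ, Fintype.card_fin] at hpow
  rw [hpow]
  refine sum_equiv (Equiv.curry (Fin m) (Fin 3) Bool) (fun σ => ?_) fun σ _ => rfl
  rw [mem_filter, Fintype.mem_piFinset]
  simp [Pattern.IsSat]

end Clause

section Exchange

variable {m n : ℕ}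

/-- A formula is its truth pattern under a fixed assignment together with the variables in its
slots. -/
def formulaEquiv (A : Fin n → Bool) : Formula m n ≃ Pattern m × (Fin m × Fin 3 → Fin n) where
  toFun F := (truthPattern A F, fun a => (F a).1)
  invFun q a := (q.2 a, A (q.2 a) == q.1 a)
  left_inv F := by
    funext a
    refine Prod.ext rfl ?_
    simp only [truthPattern]
    cases A (F a).1 <;> cases (F a).2 <;> rfl
  right_inv q := by
    refine Prod.ext (funext fun a => ?_) rfl
    simp only [truthPattern]
    have decide_eq_beq (b b' : Bool) : decide (b = (b == b')) = b' := by
      cases b <;> cases b' <;> rfl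
    exact decide_eq_beq _ _

/-- The weight of an occurrence profile, summed over the two values of the variable. -/
noncomputable def totalWeight (c : ℕ → ℕ → ℝ) (η : ℝ) (e : SlotType → ℕ) : ℝ :=
  ∑ b, profileWeight c η b e

lemma profileWeight_nonneg {c : ℕ → ℕ → ℝ} (hc : ∀ s q, 0 ≤ c s q) {η : ℝ} (hη : 0 ≤ η)
    (b : Bool) (e : SlotType → ℕ) : 0 ≤ profileWeight c η b e :=
  mul_nonneg (hc _ _) (by split_ifs <;> simp [hη])

lemma totalWeight_nonneg {c : ℕ → ℕ → ℝ} (hc : ∀ s q, 0 ≤ c s q) {η : ℝ} (hη : 0 ≤ η) :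
    0 ≤ totalWeight c η :=
  fun e => sum_nonneg fun b _ => profileWeight_nonneg hc hη b e

lemma sum_isSat_prod_profileWeight (c : ℕ → ℕ → ℝ) (η : ℝ) :
    ∑ A : Fin n → Bool, ∑ F : Formula m n with (truthPattern A F).IsSat,
      ∏ v, profileWeight c η (A v) (profile A F v) =
    ∑ σ : Pattern m with σ.IsSat, ∑ f : Fin m × Fin 3 → Fin n,
      ∏ v, totalWeight c η (typeCount (slotType σ) f v) := by
  calc _ = ∑ A : Fin n → Bool, ∑ σ : Pattern m, ∑ f : Fin m × Fin 3 → Fin n,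
        if σ.IsSat then ∏ v, profileWeight c η (A v) (typeCount (slotType σ) f v) else 0 := by
        refine sum_congr rfl fun A _ => ?_
        rw [sum_filter, ← Fintype.sum_prod_type']
        exact Fintype.sum_equiv (formulaEquiv A) _ _ fun F => rfl
    _ = _ := by
        rw [sum_comm, sum_filter]
        refine sum_congr rfl fun σ _ => ?_
        rw [sum_comm]
        split_ifs
        · exact sum_congr rfl fun f _ => (Fintype.prod_sum fun v b =>
            profileWeight c η b (typeCount (slotType σ) f v)).symm
        · simp

theorem sum_pow_numRepetitive_mul_formulaWeight_le {c : ℕ → ℕ → ℝ} (hc : ∀ s q, 0 ≤ c s q)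
    (hsymm : ∀ s q, c s q = c q s) {η : ℝ} (hη₀ : 0 ≤ η) (hη₁ : η ≤ 1) :
    ∑ F : Formula m n with ∃ A, (truthPattern A F).IsSat,
        η ^ numRepetitive F * formulaWeight c F ≤
      ∑ σ : Pattern m with σ.IsSat, ∑ f : Fin m × Fin 3 → Fin n,
        ∏ v, totalWeight c η (typeCount (slotType σ) f v) := by
  have hnonneg (A : Fin n → Bool) (F : Formula m n) :
      0 ≤ ∏ v, profileWeight c η (A v) (profile A F v) :=
    prod_nonneg fun v _ => profileWeight_nonneg hc hη₀ _ _
  rw [← sum_isSat_prod_profileWeight]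
  simp only [sum_filter]
  rw [sum_comm]
  refine sum_le_sum fun F _ => ?_
  split_ifs with hF
  · obtain ⟨A, hA, hle⟩ :=
      exists_isSat_pow_numRepetitive_mul_formulaWeight_le hc hsymm hη₀ hη₁ hF
    refine (hle.trans_eq (if_pos hA).symm).trans
      (single_le_sum (f := fun A => if (truthPattern A F).IsSat then
        ∏ v, profileWeight c η (A v) (profile A F v) else 0) (fun A _ => ?_) (mem_univ A))
    split_ifs <;> simp [hnonneg]
  · exact sum_nonneg fun A _ => by split_ifs <;> simp [hnonneg]

end Exchange

section UpperBound

variable {m n : ℕ} {p t A : ℝ} {x : SlotType → ℝ}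

/-- The parameters `x` and `t` of the saddle point bound, when a fraction `p` of the slots that
are not critical is falsified, bound the contribution of a clause by `A / (1 - t) ^ 2`. The field is
arbitrary so that the bound can be decided at rational parameters. -/
structure IsClauseBound {K : Type*} [Field K] [LinearOrder K] (p : K) (x : SlotType → K)
    (t A : K) : Prop where
  pos : ∀ s, 0 < x s
  t_pos : 0 < t
  t_lt_one : t < 1
  critical_le : 3 * (p / x falsified) ^ 2 / x critical ≤ A
  redundant_le :
    3 * ((1 - p) / x redundant) ^ 2 * (p / x falsified) + ((1 - p) / x redundant) ^ 3 ≤ t * A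

lemma IsClauseBound.nonneg (h : IsClauseBound p x t A) : 0 ≤ A :=
  le_trans (div_nonneg (by positivity) (h.pos _).le) h.critical_le

lemma IsClauseBound.one_sub_pos (h : IsClauseBound p x t A) : 0 < 1 - t := sub_pos.mpr h.t_lt_one

lemma IsClauseBound.sum_clauseFactor_le (h : IsClauseBound p x t A) {u : ℝ} (hu₀ : 0 ≤ u)
    (hu₁ : u ≤ 1) :
    ∑ ρ with ∃ j, ρ j, clauseFactor (u / x critical) ((1 - u) / t) ((1 - p) / x redundant)
      (p / x falsified) ρ ≤ A := by
  rw [sum_clauseFactor]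
  have ht := h.t_pos
  have : 0 ≤ (1 - u) / t := div_nonneg (sub_nonneg.mpr hu₁) ht.le
  calc _ = u * (3 * (p / x falsified) ^ 2 / x critical) + (1 - u) / t *
        (3 * ((1 - p) / x redundant) ^ 2 * (p / x falsified) + ((1 - p) / x redundant) ^ 3) := by
        ring
    _ ≤ u * A + (1 - u) / t * (t * A) := by gcongr; exacts [h.critical_le, h.redundant_le]
    _ = A := by field_simp; ring

/-- The polynomial and factorial factors of the weighted first moment. -/
noncomputable def slotFactor (m : ℕ) : ℝ :=
  (Real.exp 1 * (3 * m + 1)) ^ 4 * (m ! * (2 * m)!)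

lemma IsClauseBound.sum_prod_typeCount_le {W : (SlotType → ℕ) → ℝ} (hW : 0 ≤ W) {K P N : ℕ}
    (h : IsClauseBound (N / (N + P) : ℝ) x t A) {σ : Pattern m}
    (hK : #{a | slotType σ a = critical} = K) (hP : #{a | slotType σ a = redundant} = P)
    (hN : #{a | slotType σ a = falsified} = N) :
    ∑ f : Fin m × Fin 3 → Fin n, ∏ v, W (typeCount (slotType σ) f v) ≤
      slotFactor m * ((1 - t)⁻¹ ^ 2) ^ m * truncatedEGF W (m * 3) x ^ n *
        ∏ i, clauseFactor (K / m / x critical) ((1 - K / m) / t)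
          ((1 - N / (N + P)) / x redundant) (N / (N + P) / x falsified) fun j => σ (i, j) := by
  have hcard := card_critical_add_redundant_add_falsified σ
  have hKm := card_critical_le σ
  rw [hK] at hKm
  rw [hK, hP, hN] at hcard
  have hx := h.pos
  have hΦ := truncatedEGF_nonneg hW (m * 3) hx
  have hcount := RandomSAT.sum_prod_typeCount_le (κ := Fin n) (slotType σ) hW hx
  simp only [Fintype.card_prod, Fintype.card_fin, prod_slotType, hK, hP, hN] at hcount
  have hpow (s k) : 0 ≤ (x s ^ k)⁻¹ := inv_nonneg.mpr (pow_nonneg (hx s).le k)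
  have hfact := factorial_slotTypes_le (M := m - K) (by omega) hcard h.t_pos h.t_lt_one
  refine hcount.trans ?_
  rw [prod_clauseFactor, hK, hP, hN]
  calc _ = (K ! * P ! * N ! : ℝ) * ((x critical ^ K)⁻¹ * (x redundant ^ P)⁻¹ *
          (x falsified ^ N)⁻¹ * truncatedEGF W (m * 3) x ^ n) := by ring
    _ ≤ _ * ((x critical ^ K)⁻¹ * (x redundant ^ P)⁻¹ *
          (x falsified ^ N)⁻¹ * truncatedEGF W (m * 3) x ^ n) :=
        mul_le_mul_of_nonneg_right hfact (mul_nonneg (mul_nonneg (mul_nonneg (hpow _ _) (hpow _ _))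
          (hpow _ _)) (pow_nonneg hΦ n))
    _ = _ := by
        rw [div_pow _ (x critical), div_pow _ (x redundant), div_pow _ (x falsified), slotFactor]
        ring

lemma IsClauseBound.sum_isSat_filter_le {W : (SlotType → ℕ) → ℝ} (hW : 0 ≤ W) {K P N : ℕ}
    (hKm : K ≤ m) (h : IsClauseBound (N / (N + P) : ℝ) x t A) {S : Finset (Pattern m)}
    (hS : ∀ σ ∈ S, σ.IsSat ∧ #{a | slotType σ a = critical} = K ∧
      #{a | slotType σ a = redundant} = P ∧ #{a | slotType σ a = falsified} = N) :
    ∑ σ ∈ S, ∑ f : Fin m × Fin 3 → Fin n, ∏ v, W (typeCount (slotType σ) f v) ≤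
      slotFactor m * ((A / (1 - t) ^ 2) ^ m * truncatedEGF W (m * 3) x ^ n) := by
  have hu₀ : 0 ≤ (K / m : ℝ) := by positivity
  have hu₁ : (K / m : ℝ) ≤ 1 := div_le_one_of_le₀ (mod_cast hKm) m.cast_nonneg
  have hp : (N / (N + P) : ℝ) ≤ 1 := div_le_one_of_le₀ (by simp) (by positivity)
  have hx := h.pos
  have hnonneg := clauseFactor_nonneg (div_nonneg hu₀ (hx critical).le)
    (div_nonneg (sub_nonneg.mpr hu₁) h.t_pos.le) (div_nonneg (sub_nonneg.mpr hp) (hx redundant).le)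
    (div_nonneg (by positivity : 0 ≤ (N / (N + P) : ℝ)) (hx falsified).le)
  have hΦ := truncatedEGF_nonneg hW (m * 3) hx
  have hclause := h.sum_clauseFactor_le hu₀ hu₁
  have ht := h.one_sub_pos
  refine (sum_le_sum fun σ hσ =>
    h.sum_prod_typeCount_le hW (hS σ hσ).2.1 (hS σ hσ).2.2.1 (hS σ hσ).2.2.2).trans ?_
  rw [← mul_sum]
  set factor := clauseFactor (K / m / x critical) ((1 - K / m) / t)
    ((1 - N / (N + P)) / x redundant) (N / (N + P) / x falsified)
  calc _ ≤ slotFactor m * ((1 - t)⁻¹ ^ 2) ^ m * truncatedEGF W (m * 3) x ^ n *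
        ∑ σ : Pattern m with σ.IsSat, ∏ i, factor fun j => σ (i, j) := by
        unfold slotFactor
        gcongr
        · exact fun σ _ _ => prod_nonneg fun i _ => hnonneg _
        · exact fun σ hσ => mem_filter.mpr ⟨mem_univ σ, (hS σ hσ).1⟩
    _ ≤ slotFactor m * ((1 - t)⁻¹ ^ 2) ^ m * truncatedEGF W (m * 3) x ^ n * A ^ m := by
        rw [sum_isSat_prod]
        unfold slotFactor
        gcongr
        exact sum_nonneg fun ρ _ => hnonneg ρ
    _ = _ := by rw [div_pow, inv_pow, inv_pow]; ring

theorem sum_isSat_prod_typeCount_le {W : (SlotType → ℕ) → ℝ} (hW : 0 ≤ W) {D : ℝ}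
    (hD : ∀ p ∈ Set.Icc (0 : ℝ) 1, ∃ x t A, IsClauseBound p x t A ∧
      (A / (1 - t) ^ 2) ^ m * truncatedEGF W (m * 3) x ^ n ≤ D) :
    ∑ σ : Pattern m with σ.IsSat, ∑ f : Fin m × Fin 3 → Fin n,
        ∏ v, W (typeCount (slotType σ) f v) ≤
      (m + 1) * (3 * m + 1) * (slotFactor m * D) := by
  set S : Finset (Pattern m) := {σ | σ.IsSat}
  set counts : Pattern m → ℕ × ℕ := fun σ =>
    (#{a | slotType σ a = critical}, #{a | slotType σ a = falsified})
  have hmaps (σ) (_ : σ ∈ S) : counts σ ∈ range (m + 1) ×ˢ range (3 * m + 1) := by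
    have hcritical := card_critical_le σ
    have hsum := card_critical_add_redundant_add_falsified σ
    simp only [counts, mem_product, mem_range]
    omega
  have hfiber : ∀ g ∈ range (m + 1) ×ˢ range (3 * m + 1), ∑ σ ∈ S with counts σ = g,
      ∑ f : Fin m × Fin 3 → Fin n, ∏ v, W (typeCount (slotType σ) f v) ≤ slotFactor m * D := by
    rintro ⟨K, N⟩ hg
    rw [mem_product, mem_range, mem_range] at hg
    have hp : (N / (N + (3 * m - K - N : ℕ)) : ℝ) ∈ Set.Icc 0 1 :=
      ⟨by positivity, div_le_one_of_le₀ (by simp) (by positivity)⟩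
    obtain ⟨x, t, A, hbound, hle⟩ := hD _ hp
    refine (hbound.sum_isSat_filter_le hW (Nat.lt_succ_iff.mp hg.1) fun σ hσ => ?_).trans
      (mul_le_mul_of_nonneg_left hle (by unfold slotFactor; positivity))
    have hsum := card_critical_add_redundant_add_falsified σ
    simp only [S, counts, mem_filter, mem_univ, true_and, Prod.mk.injEq] at hσ
    exact ⟨hσ.1, hσ.2.1, by omega, hσ.2.2⟩
  rw [← sum_fiberwise_of_maps_to hmaps]
  refine (sum_le_card_nsmul _ _ _ hfiber).trans_eq ?_
  simp [card_product]

end UpperBound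

section GeneratingFunction

lemma truncatedEGF_one_le {T : Type*} [Fintype T] [DecidableEq T] (N : ℕ) {x : T → ℝ}
    (hx : ∀ t, 0 < x t) : truncatedEGF 1 N x ≤ Real.exp (∑ t, x t) := by
  simp only [truncatedEGF, Pi.one_apply, one_mul]
  rw [← prod_univ_sum (fun _ : T => range (N + 1)) fun t k => x t ^ k / (k ! : ℝ), Real.exp_sum]
  exact prod_le_prod
    (fun t _ => sum_nonneg fun k _ => div_nonneg (pow_nonneg (hx t).le k) (Nat.cast_nonneg _))
    fun t _ => Real.sum_le_exp_of_nonneg (hx t).le _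

lemma sum_antidiagonal_pow_div_factorial (x y : ℝ) (s : ℕ) :
    ∑ k ∈ antidiagonal s, x ^ k.1 / k.1! * (y ^ k.2 / k.2!) = (x + y) ^ s / s ! := by
  rw [(Commute.all x y).add_pow', sum_div]
  refine sum_congr rfl fun k hk => ?_
  obtain rfl := mem_antidiagonal.mp hk
  have hchoose : ((k.1 + k.2).choose k.1 : ℝ) * k.1! * k.2! = (k.1 + k.2)! := by
    have := Nat.choose_mul_factorial_mul_factorial (Nat.le_add_right k.1 k.2)
    rw [Nat.add_sub_cancel_left] at this
    exact_mod_cast this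
  rw [nsmul_eq_mul, ← hchoose]
  have : ((k.1 + k.2).choose k.1 : ℝ) ≠ 0 :=
    mod_cast (Nat.choose_pos (Nat.le_add_right k.1 k.2)).ne'
  field_simp

lemma sum_antidiagonal_sub_ite_mul (a x y : ℝ) (s : ℕ) :
    ∑ k ∈ antidiagonal s, (2 - if k.1 = 0 then a else 0) * (x ^ k.1 / k.1! * (y ^ k.2 / k.2!)) =
      (2 * (x + y) ^ s - a * y ^ s) / s ! := by
  simp only [sub_mul, sum_sub_distrib, ← mul_sum, sum_antidiagonal_pow_div_factorial, ite_mul,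
    zero_mul]
  rw [sum_eq_single (0, s) (fun k hk hne => if_neg fun h => hne ?_) (by simp)]
  · simp
    ring
  · have := mem_antidiagonal.mp hk
    exact Prod.ext h (by simpa [h] using this)

lemma sum_range_sum_range_le_sum_antidiagonal {g : ℕ → ℕ → ℝ} (hg : ∀ k p, 0 ≤ g k p) {L : ℕ}
    (hL : ∀ k p, L ≤ k + p → g k p = 0) (N : ℕ) :
    ∑ k ∈ range N, ∑ p ∈ range N, g k p ≤ ∑ s ∈ range L, ∑ a ∈ antidiagonal s, g a.1 a.2 := by
  rw [← sum_product']
  calc ∑ a ∈ range N ×ˢ range N, g a.1 a.2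
      = ∑ a ∈ range N ×ˢ range N with a.1 + a.2 < L, g a.1 a.2 :=
        (sum_filter_of_ne fun a _ ha => by contrapose! ha; exact hL _ _ ha).symm
    _ = ∑ s ∈ range L, ∑ a ∈ {a ∈ range N ×ˢ range N | a.1 + a.2 < L} with a.1 + a.2 = s,
          g a.1 a.2 :=
        (sum_fiberwise_of_maps_to (fun a ha => mem_range.mpr (mem_filter.mp ha).2) _).symm
    _ ≤ _ := sum_le_sum fun s _ => sum_le_sum_of_subset_of_nonneg
        (fun a ha => mem_antidiagonal.mpr (mem_filter.mp ha).2) fun a _ _ => hg _ _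

/-- Profiles are triples: the roles in the order critical, redundant, falsified. -/
def profileEquiv : (SlotType → ℕ) ≃ ℕ × ℕ × ℕ where
  toFun e := (e critical, e redundant, e falsified)
  invFun k
    | critical => k.1
    | redundant => k.2.1
    | falsified => k.2.2
  left_inv e := by funext s; cases s <;> rfl
  right_inv _ := rfl

lemma sum_piFinset_slotType (N : ℕ) (g : ℕ → ℕ → ℕ → ℝ) :
    ∑ e ∈ Fintype.piFinset fun _ : SlotType => range N,
        g (e critical) (e redundant) (e falsified) =
      ∑ q ∈ range N, ∑ k ∈ range N, ∑ p ∈ range N, g k p q := by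
  calc _ = ∑ a ∈ range N ×ˢ range N ×ˢ range N, g a.1 a.2.1 a.2.2 := by
        refine sum_equiv profileEquiv (fun e => ?_) fun e _ => rfl
        simp only [Fintype.mem_piFinset, mem_product]
        exact ⟨fun h => ⟨h _, h _, h _⟩, fun h s => by cases s; exacts [h.1, h.2.1, h.2.2]⟩
    _ = ∑ k ∈ range N, ∑ p ∈ range N, ∑ q ∈ range N, g k p q := by
        simp only [sum_product]
    _ = ∑ k ∈ range N, ∑ q ∈ range N, ∑ p ∈ range N, g k p q :=
        sum_congr rfl fun k _ => sum_comm
    _ = _ := sum_comm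

/-- The number of values of a variable that leave it unanchored when it has `s` true and `q` false
occurrences, none of them critical. -/
def unanchoredValues (s q : ℕ) : ℕ := min 2 (q + 1 - s)

/-- The weight of the two values of a variable with `k` critical, `p` redundant and `q` falsified
occurrences, when only the penalty `η` for unanchored values counts. -/
noncomputable def anchorWeight (η : ℝ) (k p q : ℕ) : ℝ :=
  2 - if k = 0 then (1 - η) * unanchoredValues (k + p) q else 0

lemma anchorWeight_mem_Icc {η : ℝ} (hη₀ : 0 ≤ η) (hη₁ : η ≤ 1) (k p q : ℕ) :
    anchorWeight η k p q ∈ Set.Icc 0 2 := by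
  have hle : (unanchoredValues (k + p) q : ℝ) ≤ 2 := mod_cast min_le_left _ _
  have : (0 : ℝ) ≤ unanchoredValues (k + p) q := Nat.cast_nonneg _
  unfold anchorWeight
  split_ifs
  · constructor <;> nlinarith
  · simp

lemma totalWeight_eq (c : ℕ → ℕ → ℝ) (η : ℝ) (e : SlotType → ℕ) :
    totalWeight c η e = c (e critical + e redundant) (e falsified) *
      anchorWeight η (e critical) (e redundant) (e falsified) := by
  simp only [totalWeight, anchorWeight, profileWeight, Fintype.sum_bool, ← mul_add, IsAnchored]
  congr 1
  rcases Nat.eq_zero_or_pos (e critical) with h | h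
  · rcases lt_trichotomy (e redundant) (e falsified) with hlt | heq | hgt
    · rw [show unanchoredValues (e critical + e redundant) (e falsified) = 2 by
        unfold unanchoredValues; omega]
      simp [h, hlt.not_gt, hlt.not_ge]
      ring
    · simp [h, heq, unanchoredValues]
      ring
    · rw [show unanchoredValues (e critical + e redundant) (e falsified) = 0 by
        unfold unanchoredValues; omega]
      simp [h, hgt.le, hgt]
      norm_num
  · simp [h, h.ne']
    norm_num

/-- What weights `c` that are `1` outside `[0, L) × [0, L)` add to the generating function of the
weights that are constantly `1`. The field is arbitrary so that the sum can be evaluated at rational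
parameters. -/
def egfExcess {K : Type*} [Field K] (c : ℕ → ℕ → K) (L : ℕ) (η : K) (x : SlotType → K) : K :=
  ∑ s ∈ range L, ∑ q ∈ range L, (c s q - 1) *
    ((2 * (x critical + x redundant) ^ s - (1 - η) * unanchoredValues s q * x redundant ^ s) / s ! *
      (x falsified ^ q / q !))

/-- The generating function bound, for weights that are `1` outside `[0, L) × [0, L)`. -/
noncomputable def egfBound (c : ℕ → ℕ → ℝ) (L : ℕ) (η : ℝ) (x : SlotType → ℝ) : ℝ :=
  egfExcess c L η x + 2 * Real.exp (x critical + x redundant + x falsified)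

lemma sum_sub_one_mul_anchorWeight_le {c : ℕ → ℕ → ℝ} (hc : ∀ s q, 1 ≤ c s q) {L : ℕ}
    (hL : ∀ s q, L ≤ s ∨ L ≤ q → c s q = 1) {η : ℝ} (hη₀ : 0 ≤ η) (hη₁ : η ≤ 1) {x : SlotType → ℝ}
    (hx : ∀ s, 0 < x s) (N : ℕ) :
    ∑ e ∈ Fintype.piFinset fun _ : SlotType => range N,
      (c (e critical + e redundant) (e falsified) - 1) *
        (anchorWeight η (e critical) (e redundant) (e falsified) *
          ∏ s, x s ^ e s / (e s)!) ≤ egfExcess c L η x := by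
  set g : ℕ → ℕ → ℕ → ℝ := fun q k p => (c (k + p) q - 1) * (anchorWeight η k p q *
    (x critical ^ k / k ! * (x redundant ^ p / p !)) * (x falsified ^ q / q !))
  have hx₀ (s) := (hx s).le
  have hg (q k p) : 0 ≤ g q k p := by
    have h₁ := sub_nonneg.mpr (hc (k + p) q)
    have h₂ := (anchorWeight_mem_Icc hη₀ hη₁ k p q).1
    have h₃ := pow_nonneg (hx₀ critical) k
    have h₄ := pow_nonneg (hx₀ redundant) p
    have h₅ := pow_nonneg (hx₀ falsified) q
    positivity
  have hzero (q k p) (h : L ≤ k + p ∨ L ≤ q) : g q k p = 0 := by simp [g, hL _ _ h]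
  calc _ = ∑ q ∈ range N, ∑ k ∈ range N, ∑ p ∈ range N, g q k p := by
        rw [← sum_piFinset_slotType N fun k p q => g q k p]
        refine sum_congr rfl fun e _ => ?_
        simp only [prod_slotType, g]
        ring
    _ ≤ ∑ q ∈ range N, ∑ s ∈ range L, ∑ k ∈ antidiagonal s, g q k.1 k.2 :=
        sum_le_sum fun q _ => sum_range_sum_range_le_sum_antidiagonal (hg q)
          (fun k p h => hzero q k p (.inl h)) N
    _ ≤ ∑ q ∈ range L, ∑ s ∈ range L, ∑ k ∈ antidiagonal s, g q k.1 k.2 := by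
        rw [← sum_filter_of_ne (p := (· < L)) fun q _ hq => by
          contrapose! hq
          exact sum_eq_zero fun s _ => sum_eq_zero fun k _ => hzero q _ _ (.inr hq)]
        exact sum_le_sum_of_subset_of_nonneg (fun q hq => mem_range.mpr (mem_filter.mp hq).2)
          fun q _ _ => sum_nonneg fun s _ => sum_nonneg fun k _ => hg _ _ _
    _ = _ := by
        rw [sum_comm]
        refine sum_congr rfl fun s _ => sum_congr rfl fun q _ => ?_
        rw [← sum_antidiagonal_sub_ite_mul, sum_mul, mul_sum]
        refine sum_congr rfl fun k hk => ?_
        simp only [g, anchorWeight, mem_antidiagonal.mp hk]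

theorem truncatedEGF_totalWeight_le {c : ℕ → ℕ → ℝ} (hc : ∀ s q, 1 ≤ c s q) {L : ℕ}
    (hL : ∀ s q, L ≤ s ∨ L ≤ q → c s q = 1) {η : ℝ} (hη₀ : 0 ≤ η) (hη₁ : η ≤ 1) {x : SlotType → ℝ}
    (hx : ∀ s, 0 < x s) (N : ℕ) :
    truncatedEGF (totalWeight c η) N x ≤ egfBound c L η x := by
  have hterm (e : SlotType → ℕ) : totalWeight c η e * ∏ s, x s ^ e s / (e s)! ≤
      (c (e critical + e redundant) (e falsified) - 1) *
        (anchorWeight η (e critical) (e redundant) (e falsified) * ∏ s, x s ^ e s / (e s)!) +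
      2 * (1 * ∏ s, x s ^ e s / (e s)!) := by
    have hprod : 0 ≤ ∏ s, x s ^ e s / ((e s)! : ℝ) :=
      prod_nonneg fun s _ => div_nonneg (pow_nonneg (hx s).le _) (Nat.cast_nonneg _)
    have hle := mul_le_mul_of_nonneg_right
      (anchorWeight_mem_Icc hη₀ hη₁ (e critical) (e redundant) (e falsified)).2 hprod
    rw [totalWeight_eq]
    linarith
  have hexp := truncatedEGF_one_le N hx
  rw [univ_slotType, sum_insert (by simp), sum_pair (by simp), ← add_assoc] at hexp
  calc _ ≤ _ := sum_le_sum fun e _ => hterm e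
    _ ≤ _ := by
        rw [sum_add_distrib, ← mul_sum]
        exact add_le_add (sum_sub_one_mul_anchorWeight_le hc hL hη₀ hη₁ hx _)
          (mul_le_mul_of_nonneg_left hexp zero_le_two)

end GeneratingFunction

section Concentration

lemma sum_factorial_mul_factorial (ι : Type*) [Fintype ι] [DecidableEq ι] :
    ∑ b : ι → Bool, ((#{i | b i = true})! * (#{i | b i = false})! : ℝ) =
      (Fintype.card ι + 1) * (Fintype.card ι)! := by
  have hfalse (b : ι → Bool) : #{i | b i = false} = Fintype.card ι - #{i | b i = true} := by
    have := card_filter_add_card_filter_not (s := univ) fun i => b i = true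
    simp only [Bool.not_eq_true, card_univ] at this
    omega
  calc _ = ∑ s ∈ (univ : Finset ι).powerset, ((#s)! * (Fintype.card ι - #s)! : ℝ) := by
        simp only [hfalse]
        exact sum_nbij' (fun b => ({i | b i = true} : Finset ι)) (fun s i => decide (i ∈ s))
          (by simp) (by simp) (fun b _ => by simp) (fun s _ => by simp) fun b _ => rfl
    _ = ∑ _k ∈ range (Fintype.card ι + 1), ((Fintype.card ι)! : ℝ) := by
        rw [sum_powerset_apply_card (fun k => (k ! * (Fintype.card ι - k)! : ℝ)), card_univ]
        refine sum_congr rfl fun k hk => ?_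
        rw [nsmul_eq_mul, ← mul_assoc]
        exact_mod_cast Nat.choose_mul_factorial_mul_factorial (Nat.lt_succ_iff.mp (mem_range.mp hk))
    _ = _ := by simp

lemma exp_neg_le_one_sub_add_sq {u : ℝ} (hu : 0 ≤ u) : Real.exp (-u) ≤ 1 - u + u ^ 2 := by
  have hpos : 0 < 1 + u + u ^ 2 / 2 := by positivity
  rw [Real.exp_neg]
  refine (inv_anti₀ hpos (Real.quadratic_le_exp_of_nonneg hu)).trans ?_
  rw [inv_le_iff_one_le_mul₀ hpos]
  have : 0 ≤ u ^ 2 / 2 + u ^ 3 / 2 + u ^ 4 / 2 := by positivity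
  linarith

/-- The mean of `l` at a pair of independent Poisson variables of rate `lam`, for a function `l`
supported on `[0, L) × [0, L)`. -/
noncomputable def poissonMean (l : ℕ → ℕ → ℝ) (L : ℕ) (lam : ℝ) : ℝ :=
  (∑ s ∈ range L, ∑ q ∈ range L, l s q * (lam ^ s / s ! * (lam ^ q / q !))) / Real.exp (2 * lam)

lemma exp_mul_poissonMean_le_truncatedEGF {l : ℕ → ℕ → ℝ} (hl : ∀ s q, 0 ≤ l s q) {L N : ℕ}
    (hLN : L ≤ N + 1) {lam : ℝ} (hlam : 0 < lam) :
    Real.exp (2 * lam) * poissonMean l L lam ≤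
      truncatedEGF (fun e : Bool → ℕ => l (e true) (e false)) N fun _ => lam := by
  rw [poissonMean, mul_div_cancel₀ _ (Real.exp_pos _).ne', truncatedEGF, ← sum_product']
  calc _ ≤ ∑ a ∈ range (N + 1) ×ˢ range (N + 1),
        l a.1 a.2 * (lam ^ a.1 / a.1! * (lam ^ a.2 / a.2!)) :=
        sum_le_sum_of_subset_of_nonneg
          (product_subset_product (range_subset_range.mpr hLN) (range_subset_range.mpr hLN))
          fun a _ _ => mul_nonneg (hl _ _) (by positivity)
    _ = _ := by
        refine sum_nbij' (fun a b => cond b a.1 a.2) (fun e => (e true, e false))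
          (by simp +contextual)
          (by simp +contextual) (fun a _ => rfl) (fun e _ => by funext b; cases b <;> rfl)
          fun a _ => ?_
        rw [Fintype.prod_bool]
        rfl

lemma truncatedEGF_exp_neg_le {l : ℕ → ℕ → ℝ} {B : ℝ} (hl : ∀ s q, l s q ∈ Set.Icc 0 B) {L N : ℕ}
    (hLN : L ≤ N + 1) {lam : ℝ} (hlam : 0 < lam) {u : ℝ} (hu : 0 ≤ u) :
    truncatedEGF (fun e : Bool → ℕ => Real.exp (-(u * l (e true) (e false)))) N (fun _ => lam) ≤
      Real.exp (2 * lam) * Real.exp (u ^ 2 * B ^ 2 - u * poissonMean l L lam) := by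
  have hexp := truncatedEGF_one_le (T := Bool) N fun _ => hlam
  have hmean := exp_mul_poissonMean_le_truncatedEGF (fun s q => (hl s q).1) hLN hlam
  rw [Fintype.sum_bool, ← two_mul] at hexp
  have hle (s q) : Real.exp (-(u * l s q)) ≤ (1 + u ^ 2 * B ^ 2) * 1 - u * l s q := by
    have hsq := pow_le_pow_left₀ (hl s q).1 (hl s q).2 2
    have := exp_neg_le_one_sub_add_sq (mul_nonneg hu (hl s q).1)
    rw [mul_pow] at this
    nlinarith [mul_le_mul_of_nonneg_left hsq (sq_nonneg u)]
  calc _ ≤ (1 + u ^ 2 * B ^ 2) * truncatedEGF (1 : (Bool → ℕ) → ℝ) N (fun _ => lam) -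
        u * truncatedEGF (fun e : Bool → ℕ => l (e true) (e false)) N (fun _ => lam) := by
        simp only [truncatedEGF, mul_sum, ← sum_sub_distrib, ← mul_assoc, ← sub_mul]
        exact sum_le_sum fun e _ => mul_le_mul_of_nonneg_right (hle _ _)
          (prod_nonneg fun t _ => by positivity)
    _ ≤ (1 + u ^ 2 * B ^ 2) * Real.exp (2 * lam) -
        u * (Real.exp (2 * lam) * poissonMean l L lam) := by gcongr
    _ = Real.exp (2 * lam) * ((u ^ 2 * B ^ 2 - u * poissonMean l L lam) + 1) := by ring
    _ ≤ _ := by gcongr; exact Real.add_one_le_exp _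

variable {m n : ℕ}

lemma sum_prod_occ (W : (Bool → ℕ) → ℝ) :
    ∑ F : Formula m n, ∏ v, W (occ F v) =
      ∑ b : Pattern m, ∑ f : Fin m × Fin 3 → Fin n, ∏ v, W (typeCount b f v) := by
  rw [sum_comm, ← Fintype.sum_prod_type']
  refine Fintype.sum_equiv (Equiv.arrowProdEquivProdArrow _ (fun _ => Fin n) fun _ => Bool) _ _
    fun F => prod_congr rfl fun v _ => congrArg W (funext fun b => ?_)
  simp only [occ, typeCount, Prod.ext_iff]
  rfl

theorem sum_prod_occ_le {W : (Bool → ℕ) → ℝ} (hW : 0 ≤ W) {lam : ℝ} (hlam : 0 < lam) :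
    ∑ F : Formula m n, ∏ v, W (occ F v) ≤
      (3 * m + 1) * (3 * m)! / lam ^ (3 * m) * truncatedEGF W (3 * m) (fun _ => lam) ^ n := by
  have hcard : Fintype.card (Fin m × Fin 3) = 3 * m := by simp [mul_comm]
  have hfactor (b : Pattern m) : ∏ t, ((#{i | b i = t})! / lam ^ #{i | b i = t} : ℝ) =
      (#{i | b i = true})! * (#{i | b i = false})! / lam ^ (3 * m) := by
    have hsum := card_filter_add_card_filter_not (s := univ) fun i => b i = true
    simp only [Bool.not_eq_true, card_univ, hcard] at hsum
    rw [Fintype.prod_bool, ← hsum, pow_add, div_mul_div_comm]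
  rw [sum_prod_occ]
  refine (sum_le_sum fun b _ => sum_prod_typeCount_le b hW fun _ => hlam).trans_eq ?_
  simp only [hfactor, hcard, Fintype.card_fin]
  rw [← sum_mul, ← sum_div, sum_factorial_mul_factorial, hcard]
  push_cast
  rfl

end Concentration

section Repetition

variable {m n : ℕ}

lemma card_repeated_mul_le (i : Fin m) {j j' : Fin 3} (hj : j ≠ j') :
    #{F : Formula m n | (F (i, j)).1 = (F (i, j')).1} * n ≤ (2 * n) ^ (3 * m) := by
  have hcard : Fintype.card (Formula m n) = (2 * n) ^ (3 * m) := by simp [mul_comm]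
  have hne : (i, j') ≠ (i, j) := fun h => hj (Prod.ext_iff.mp h).2.symm
  calc _ = Fintype.card ({F : Formula m n // (F (i, j)).1 = (F (i, j')).1} × Fin n) := by
        rw [Fintype.card_prod, Fintype.card_subtype, Fintype.card_fin]
    _ ≤ Fintype.card (Formula m n) := Fintype.card_le_of_injective
        (fun q => Function.update q.1.1 (i, j) (q.2, (q.1.1 (i, j)).2)) ?_
    _ = _ := hcard
  rintro ⟨⟨F, hF⟩, v⟩ ⟨⟨G, hG⟩, u⟩ h
  have hslot (a) := congrFun h a
  obtain ⟨rfl, hsign⟩ : v = u ∧ (F (i, j)).2 = (G (i, j)).2 := by simpa using hslot (i, j)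
  have hother (a) (ha : a ≠ (i, j)) : F a = G a := by simpa [ha] using hslot a
  obtain rfl : F = G := by
    funext a
    by_cases ha : a = (i, j)
    · rw [ha]
      exact Prod.ext (by rw [hF, hG, hother _ hne]) hsign
    · exact hother a ha
  rfl

lemma numRepetitive_le_sum (F : Formula m n) :
    numRepetitive F ≤ ∑ i, ∑ j : Fin 3, ∑ j' : Fin 3 with j ≠ j',
      if (F (i, j)).1 = (F (i, j')).1 then 1 else 0 := by
  rw [numRepetitive, card_filter]
  refine sum_le_sum fun i _ => ?_
  split_ifs with hi
  · exact Nat.zero_le _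
  · simp only [Function.Injective, not_forall] at hi
    obtain ⟨j, j', heq, hne⟩ := hi
    calc 1 = if (F (i, j)).1 = (F (i, j')).1 then 1 else 0 := (if_pos heq).symm
      _ ≤ ∑ j' : Fin 3 with j ≠ j', if (F (i, j)).1 = (F (i, j')).1 then 1 else 0 :=
        single_le_sum (f := fun j' => if (F (i, j)).1 = (F (i, j')).1 then 1 else 0)
          (fun _ _ => Nat.zero_le _) (mem_filter.mpr ⟨mem_univ _, hne⟩)
      _ ≤ _ := single_le_sum (f := fun j => ∑ j' : Fin 3 with j ≠ j',
          if (F (i, j)).1 = (F (i, j')).1 then 1 else 0) (fun _ _ => Nat.zero_le _) (mem_univ j)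

theorem sum_numRepetitive_mul_le :
    (∑ F : Formula m n, numRepetitive F) * n ≤ 6 * m * (2 * n) ^ (3 * m) := by
  calc _ ≤ (∑ F : Formula m n, ∑ i, ∑ j : Fin 3, ∑ j' : Fin 3 with j ≠ j',
        if (F (i, j)).1 = (F (i, j')).1 then 1 else 0) * n :=
        Nat.mul_le_mul_right _ (sum_le_sum fun F _ => numRepetitive_le_sum F)
    _ = ∑ i : Fin m, ∑ j : Fin 3, ∑ j' : Fin 3 with j ≠ j',
        #{F : Formula m n | (F (i, j)).1 = (F (i, j')).1} * n := by
        simp only [card_filter, sum_mul]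
        rw [sum_comm]
        refine sum_congr rfl fun i _ => ?_
        rw [sum_comm]
        exact sum_congr rfl fun j _ => sum_comm
    _ ≤ ∑ i : Fin m, ∑ j : Fin 3, ∑ j' : Fin 3 with j ≠ j', (2 * n) ^ (3 * m) :=
        sum_le_sum fun i _ => sum_le_sum fun j _ => sum_le_sum fun j' hj =>
          card_repeated_mul_le i (mem_filter.mp hj).2
    _ = _ := by
        have hpairs : ∑ j : Fin 3, #{j' : Fin 3 | j ≠ j'} = 6 := by decide
        simp only [sum_const, smul_eq_mul, ← sum_mul, hpairs, card_univ, Fintype.card_fin]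
        ring

end Repetition

section Probability

variable {m n : ℕ}

/-- The probability of an event for a uniformly random formula. -/
noncomputable def formulaProb (P : Formula m n → Prop) : ℝ :=
  Nat.card {F // P F} / (2 * n) ^ (3 * m)

lemma formulaProb_nonneg (P : Formula m n → Prop) : 0 ≤ formulaProb P := by
  unfold formulaProb; positivity

lemma formulaProb_mul_le {P : Formula m n → Prop} {g : Formula m n → ℝ} (hg : ∀ F, 0 ≤ g F) {a : ℝ}
    (h : ∀ F, P F → a ≤ g F) : formulaProb P * a ≤ (∑ F, g F) / (2 * n) ^ (3 * m) := by
  classical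
  rw [formulaProb, div_mul_eq_mul_div]
  gcongr
  rw [Nat.card_eq_fintype_card, Fintype.card_subtype, ← nsmul_eq_mul]
  exact (card_nsmul_le_sum _ _ _ fun F hF => h F (mem_filter.mp hF).2).trans
    (sum_le_sum_of_subset_of_nonneg (filter_subset _ _) fun F _ _ => hg F)

lemma formulaProb_le_add {P Q R : Formula m n → Prop} (h : ∀ F, P F → Q F ∨ R F) :
    formulaProb P ≤ formulaProb Q + formulaProb R := by
  classical
  unfold formulaProb
  rw [← add_div]
  gcongr
  simp only [Nat.card_eq_fintype_card, Fintype.card_subtype]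
  norm_cast
  refine (card_le_card fun F hF => ?_).trans (card_union_le _ _)
  simpa using h F (by simpa using hF)

end Probability

section FirstMoment

variable {m n : ℕ} {r : ℝ}

/-- The logarithm of the weight `formulaWeight` for the weights `exp (l s q)`. -/
noncomputable def formulaLogWeight (l : ℕ → ℕ → ℝ) (F : Formula m n) : ℝ :=
  ∑ v, l (occ F v true) (occ F v false)

/-- The subexponential factor in the first moment bounds. -/
noncomputable def polyFactor (m : ℕ) : ℝ := (Real.exp 1 * (3 * m + 1)) ^ 8 * Real.exp 6

lemma div_pow_le_exp_six (hr : 1 ≤ r) (hn : 1 ≤ n) (hm : (m : ℝ) ≤ r * n + 1) :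
    ((m : ℝ) / (r * n)) ^ (3 * m) ≤ Real.exp 6 := by
  have hrn : 1 ≤ r * n := one_le_mul_of_one_le_of_one_le hr (mod_cast hn)
  have hrn₀ : 0 < r * n := zero_lt_one.trans_le hrn
  have hbase : (m : ℝ) / (r * n) ≤ Real.exp (1 / (r * n)) := by
    refine le_trans ?_ (Real.add_one_le_exp _)
    rw [div_add_one hrn₀.ne']
    gcongr
    linarith
  refine (pow_le_pow_left₀ (by positivity) hbase _).trans ?_
  rw [← Real.exp_nat_mul, Real.exp_le_exp, mul_one_div, div_le_iff₀ hrn₀]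
  push_cast
  linarith

lemma factorial_div_pow_mul_exp_le (hr : 1 ≤ r) (hn : 1 ≤ n) (hm₁ : r * n ≤ m)
    (hm₂ : (m : ℝ) ≤ r * n + 1) :
    ((3 * m)! : ℝ) / (3 * r / 2) ^ (3 * m) * Real.exp (2 * (3 * r / 2)) ^ n ≤
      Real.exp 1 * (3 * m + 1) * Real.exp 6 * (2 * n) ^ (3 * m) := by
  have : 0 < r := by linarith
  have : (0 : ℝ) < n := by positivity
  have hexp : Real.exp (2 * (3 * r / 2)) ^ n ≤ Real.exp 1 ^ (3 * m) := by
    rw [← Real.exp_nat_mul, ← Real.exp_nat_mul, Real.exp_le_exp]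
    push_cast
    linarith
  have hfact := factorial_le_exp_mul_succ_mul_pow (3 * m)
  push_cast at hfact
  calc _ ≤ Real.exp 1 * (3 * m + 1) * (3 * m / Real.exp 1) ^ (3 * m) / (3 * r / 2) ^ (3 * m) *
        Real.exp 1 ^ (3 * m) := by gcongr
    _ = Real.exp 1 * (3 * m + 1) *
        (3 * m / Real.exp 1 / (3 * r / 2) * Real.exp 1) ^ (3 * m) := by
        rw [mul_pow, div_pow _ (3 * r / 2)]; ring
    _ = Real.exp 1 * (3 * m + 1) * ((m / (r * n)) ^ (3 * m) * (2 * n) ^ (3 * m)) := by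
        rw [← mul_pow]
        congr 2
        field_simp
    _ ≤ Real.exp 1 * (3 * m + 1) * (Real.exp 6 * (2 * n) ^ (3 * m)) := by
        gcongr
        exact div_pow_le_exp_six hr hn hm₂
    _ = _ := by ring

lemma slotFactor_mul_pow_le (hr : 1 ≤ r) (hn : 1 ≤ n) (hm : (m : ℝ) ≤ r * n + 1) :
    slotFactor m * (2 * Real.exp 3 / r ^ 3) ^ m ≤
      (Real.exp 1 * (3 * m + 1)) ^ 6 * Real.exp 6 * (2 * n) ^ (3 * m) := by
  have : 0 < r := by linarith
  have : (0 : ℝ) < n := by positivity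
  have hexp : Real.exp 3 = Real.exp 1 ^ 3 := by rw [← Real.exp_nat_mul]; norm_num
  have hfact := factorial_le_exp_mul_succ_mul_pow (2 * m)
  push_cast at hfact
  obtain ⟨E, hE⟩ : ∃ E, E = Real.exp 1 * (3 * (m : ℝ) + 1) := ⟨_, rfl⟩
  have hfact₁ : (m ! : ℝ) ≤ E * (m / Real.exp 1) ^ m :=
    (factorial_le_exp_mul_succ_mul_pow m).trans (by rw [hE]; gcongr; linarith)
  have hfact₂ : ((2 * m)! : ℝ) ≤ E * (2 * m / Real.exp 1) ^ (2 * m) :=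
    hfact.trans (by rw [hE]; gcongr; linarith)
  have hE₀ : 0 ≤ E := by rw [hE]; positivity
  have hregroup (a b c : ℝ) :
      E ^ 4 * (E * a ^ m * (E * b ^ (2 * m)) * c ^ m) = E ^ 6 * (a * b ^ 2 * c) ^ m := by ring
  calc _ = E ^ 4 * (m ! * (2 * m)! * (2 * Real.exp 3 / r ^ 3) ^ m) := by
        rw [slotFactor, ← hE]; ring
    _ ≤ E ^ 4 * (E * (m / Real.exp 1) ^ m * (E * (2 * m / Real.exp 1) ^ (2 * m)) *
        (2 * Real.exp 3 / r ^ 3) ^ m) := by gcongr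
    _ = E ^ 6 * ((m / Real.exp 1) * (2 * m / Real.exp 1) ^ 2 * (2 * Real.exp 3 / r ^ 3)) ^ m :=
        hregroup _ _ _
    _ = E ^ 6 * ((m / (r * n)) ^ (3 * m) * (2 * n) ^ (3 * m)) := by
        rw [← mul_pow, pow_mul _ 3, hexp]
        congr 2
        field_simp
    _ ≤ E ^ 6 * (Real.exp 6 * (2 * n) ^ (3 * m)) := by
        gcongr
        exact div_pow_le_exp_six hr hn hm
    _ = _ := by rw [hE]; ring

lemma mul_exp_factor_le_polyFactor (m : ℕ) :
    (3 * m + 1) * (Real.exp 1 * (3 * m + 1) * Real.exp 6) ≤ polyFactor m := by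
  have h₁ : (1 : ℝ) ≤ Real.exp 1 * (3 * m + 1) :=
    one_le_mul_of_one_le_of_one_le (Real.one_le_exp zero_le_one) (by simp)
  have h₂ : 3 * m + 1 ≤ Real.exp 1 * (3 * m + 1) :=
    le_mul_of_one_le_left (by positivity) (Real.one_le_exp zero_le_one)
  calc _ ≤ Real.exp 1 * (3 * m + 1) * (Real.exp 1 * (3 * m + 1) * Real.exp 6) := by gcongr
    _ = (Real.exp 1 * (3 * m + 1)) ^ 2 * Real.exp 6 := by ring
    _ ≤ _ := by unfold polyFactor; gcongr; norm_num

lemma sum_exp_neg_formulaLogWeight_le (hr : 1 ≤ r) (hn : 1 ≤ n) (hm₁ : r * n ≤ m)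
    (hm₂ : (m : ℝ) ≤ r * n + 1) {l : ℕ → ℕ → ℝ} {B : ℝ} (hl : ∀ s q, l s q ∈ Set.Icc 0 B) {L : ℕ}
    (hL : L ≤ 3 * m + 1) {u : ℝ} (hu : 0 ≤ u) :
    ∑ F : Formula m n, Real.exp (-(u * formulaLogWeight l F)) ≤
      polyFactor m * Real.exp (u ^ 2 * B ^ 2 - u * poissonMean l L (3 * r / 2)) ^ n *
        (2 * n) ^ (3 * m) := by
  set M := poissonMean l L (3 * r / 2)
  set W : (Bool → ℕ) → ℝ := fun e => Real.exp (-(u * l (e true) (e false)))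
  have hW : 0 ≤ W := fun e => (Real.exp_pos _).le
  have hlam : 0 < 3 * r / 2 := by linarith
  have hprod (F : Formula m n) :
      Real.exp (-(u * formulaLogWeight l F)) = ∏ v, W (occ F v) := by
    rw [formulaLogWeight, mul_sum, ← sum_neg_distrib, Real.exp_sum]
  have hEGF := truncatedEGF_exp_neg_le hl hL hlam hu
  have hEGF₀ := truncatedEGF_nonneg hW (3 * m) (x := fun _ => 3 * r / 2) fun _ => hlam
  simp only [hprod]
  calc _ ≤ (3 * m + 1) * (3 * m)! / (3 * r / 2) ^ (3 * m) *
        (Real.exp (2 * (3 * r / 2)) * Real.exp (u ^ 2 * B ^ 2 - u * M)) ^ n :=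
        (sum_prod_occ_le hW hlam).trans (by gcongr)
    _ = (3 * m + 1) * ((3 * m)! / (3 * r / 2) ^ (3 * m) * Real.exp (2 * (3 * r / 2)) ^ n) *
        Real.exp (u ^ 2 * B ^ 2 - u * M) ^ n := by rw [mul_pow]; ring
    _ ≤ (3 * m + 1) * (Real.exp 1 * (3 * m + 1) * Real.exp 6 * (2 * n) ^ (3 * m)) *
        Real.exp (u ^ 2 * B ^ 2 - u * M) ^ n := by
        have := factorial_div_pow_mul_exp_le hr hn hm₁ hm₂
        gcongr (3 * m + 1) * ?_ * _
    _ = (3 * m + 1) * (Real.exp 1 * (3 * m + 1) * Real.exp 6) *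
        Real.exp (u ^ 2 * B ^ 2 - u * M) ^ n * (2 * n) ^ (3 * m) := by ring
    _ ≤ _ := by gcongr; exact mul_exp_factor_le_polyFactor m

theorem formulaProb_formulaLogWeight_lt_le (hr : 1 ≤ r) (hn : 1 ≤ n) (hm₁ : r * n ≤ m)
    (hm₂ : (m : ℝ) ≤ r * n + 1) {l : ℕ → ℕ → ℝ} {B : ℝ} (hl : ∀ s q, l s q ∈ Set.Icc 0 B) {L : ℕ}
    (hL : L ≤ 3 * m + 1) {u : ℝ} (hu : 0 ≤ u) (ε : ℝ) :
    formulaProb (fun F : Formula m n =>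
        formulaLogWeight l F < n * (poissonMean l L (3 * r / 2) - ε)) ≤
      polyFactor m * Real.exp (u ^ 2 * B ^ 2 - u * ε) ^ n := by
  set M := poissonMean l L (3 * r / 2)
  have hmarkov := formulaProb_mul_le (a := Real.exp (-(u * (n * (M - ε)))))
    (P := fun F : Formula m n => formulaLogWeight l F < n * (M - ε))
    (fun F => (Real.exp_pos (-(u * formulaLogWeight l F))).le)
    fun F hF => Real.exp_le_exp.mpr (neg_le_neg (mul_le_mul_of_nonneg_left hF.le hu))
  have hsplit : Real.exp (u ^ 2 * B ^ 2 - u * ε) ^ n =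
      Real.exp (u ^ 2 * B ^ 2 - u * M) ^ n / Real.exp (-(u * (n * (M - ε)))) := by
    rw [← Real.exp_nat_mul, ← Real.exp_nat_mul, ← Real.exp_sub]
    congr 1
    ring
  rw [hsplit, ← mul_div_assoc, le_div_iff₀ (Real.exp_pos _)]
  exact hmarkov.trans (div_le_of_le_mul₀ (by positivity) (by unfold polyFactor; positivity)
    (sum_exp_neg_formulaLogWeight_le hr hn hm₁ hm₂ hl hL hu))

/-- The contribution of a clause to the weighted first moment at `m = r * n`, relative to the
number of formulae. -/
noncomputable def clauseRate (r t A : ℝ) : ℝ := r ^ 3 * (A / (1 - t) ^ 2) / (2 * Real.exp 3)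

/-- Saddle points exist for every fraction `p` of falsified slots, so that the weighted first moment
at `m = r * n` grows at most like `exp (R * n)` relative to the number of formulae. -/
def IsFirstMomentRate (r : ℝ) (c : ℕ → ℕ → ℝ) (L : ℕ) (η R : ℝ) : Prop :=
  ∀ p ∈ Set.Icc (0 : ℝ) 1, ∃ x t A, IsClauseBound p x t A ∧ clauseRate r t A ≤ 1 ∧
    egfBound c L η x * clauseRate r t A ^ r ≤ Real.exp R

lemma pow_le_rpow_pow {g : ℝ} (hg₀ : 0 ≤ g) (hg₁ : g ≤ 1) (hr : 0 < r) (hm : r * n ≤ m) :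
    g ^ m ≤ (g ^ r) ^ n := by
  rcases hg₀.eq_or_lt with rfl | hg
  · rw [Real.zero_rpow hr.ne']
    rcases n.eq_zero_or_pos with rfl | hn
    · simpa using pow_le_one₀ le_rfl zero_le_one
    · have hm₀ : m ≠ 0 := by
        rintro rfl
        have : 0 < r * n := by positivity
        simp at hm
        linarith
      rw [zero_pow hm₀, zero_pow hn.ne']
  · rw [← Real.rpow_mul_natCast hg₀, ← Real.rpow_natCast]
    exact Real.rpow_le_rpow_of_exponent_ge hg hg₁ hm

variable {c : ℕ → ℕ → ℝ} {L : ℕ} {η R : ℝ}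

lemma IsFirstMomentRate.exists_pow_mul_pow_le (h : IsFirstMomentRate r c L η R)
    (hc : ∀ s q, 1 ≤ c s q) (hL : ∀ s q, L ≤ s ∨ L ≤ q → c s q = 1) (hη₀ : 0 ≤ η) (hη₁ : η ≤ 1)
    (hr : 0 < r) (hm : r * n ≤ m) (N : ℕ) {p : ℝ} (hp : p ∈ Set.Icc 0 1) :
    ∃ x t A, IsClauseBound p x t A ∧
      (A / (1 - t) ^ 2) ^ m * truncatedEGF (totalWeight c η) N x ^ n ≤
        (2 * Real.exp 3 / r ^ 3) ^ m * Real.exp R ^ n := by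
  obtain ⟨x, t, A, hbound, hle, hrate⟩ := h p hp
  refine ⟨x, t, A, hbound, ?_⟩
  have hg₀ : 0 ≤ clauseRate r t A := by
    have := hbound.nonneg
    unfold clauseRate
    positivity
  have hΦ₀ := truncatedEGF_nonneg
    (totalWeight_nonneg (fun s q => zero_le_one.trans (hc s q)) hη₀) N hbound.pos
  have hΦ := truncatedEGF_totalWeight_le hc hL hη₀ hη₁ hbound.pos N
  have hA : A / (1 - t) ^ 2 = 2 * Real.exp 3 / r ^ 3 * clauseRate r t A := by
    unfold clauseRate
    field_simp
  calc _ = (2 * Real.exp 3 / r ^ 3) ^ m *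
        (truncatedEGF (totalWeight c η) N x ^ n * clauseRate r t A ^ m) := by
        rw [hA, mul_pow]; ring
    _ ≤ (2 * Real.exp 3 / r ^ 3) ^ m *
        (egfBound c L η x ^ n * (clauseRate r t A ^ r) ^ n) := by
        have := pow_le_rpow_pow hg₀ hle hr hm
        have := hΦ₀.trans hΦ
        gcongr
    _ = (2 * Real.exp 3 / r ^ 3) ^ m * (egfBound c L η x * clauseRate r t A ^ r) ^ n := by
        rw [mul_pow]
    _ ≤ _ := by
        have := hΦ₀.trans hΦ
        have := Real.rpow_nonneg hg₀ r
        gcongr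

theorem IsFirstMomentRate.sum_pow_numRepetitive_mul_formulaWeight_le
    (h : IsFirstMomentRate r c L η R) (hc : ∀ s q, 1 ≤ c s q) (hsymm : ∀ s q, c s q = c q s)
    (hL : ∀ s q, L ≤ s ∨ L ≤ q → c s q = 1) (hη₀ : 0 ≤ η) (hη₁ : η ≤ 1) (hr : 1 ≤ r) (hn : 1 ≤ n)
    (hm₁ : r * n ≤ m) (hm₂ : (m : ℝ) ≤ r * n + 1) :
    ∑ F : Formula m n with ∃ A, (truthPattern A F).IsSat,
        η ^ numRepetitive F * formulaWeight c F ≤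
      polyFactor m * Real.exp R ^ n * (2 * n) ^ (3 * m) := by
  have hc₀ (s q) : 0 ≤ c s q := zero_le_one.trans (hc s q)
  have h₁ : (m : ℝ) + 1 ≤ Real.exp 1 * (3 * m + 1) := by
    nlinarith [Real.add_one_le_exp 1, (m.cast_nonneg : (0 : ℝ) ≤ m)]
  have h₂ : 3 * (m : ℝ) + 1 ≤ Real.exp 1 * (3 * m + 1) :=
    le_mul_of_one_le_left (by positivity) (Real.one_le_exp zero_le_one)
  calc _ ≤ (m + 1) * (3 * m + 1) *
        (slotFactor m * ((2 * Real.exp 3 / r ^ 3) ^ m * Real.exp R ^ n)) :=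
        (RandomSAT.sum_pow_numRepetitive_mul_formulaWeight_le hc₀ hsymm hη₀ hη₁).trans <|
          sum_isSat_prod_typeCount_le (totalWeight_nonneg hc₀ hη₀) fun _ hp =>
            h.exists_pow_mul_pow_le hc hL hη₀ hη₁ (by linarith) hm₁ _ hp
    _ = (m + 1) * (3 * m + 1) * (slotFactor m * (2 * Real.exp 3 / r ^ 3) ^ m) *
        Real.exp R ^ n := by ring
    _ ≤ Real.exp 1 * (3 * m + 1) * (Real.exp 1 * (3 * m + 1)) *
        ((Real.exp 1 * (3 * m + 1)) ^ 6 * Real.exp 6 * (2 * n) ^ (3 * m)) * Real.exp R ^ n := by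
        have := slotFactor_mul_pow_le hr hn hm₂
        gcongr ?_ * ?_ * ?_ * _
        unfold slotFactor
        positivity
    _ = _ := by unfold polyFactor; ring

end FirstMoment

section LogWeight

variable {m n : ℕ} {r : ℝ} {l : ℕ → ℕ → ℝ} {L : ℕ} {η R : ℝ}

/-- An admissible logarithmic weight for the numbers of positive and negative occurrences of a
variable, supported on `[0, L) × [0, L)`. -/
structure IsLogWeight (l : ℕ → ℕ → ℝ) (L : ℕ) : Prop where
  nonneg : ∀ s q, 0 ≤ l s q
  symm : ∀ s q, l s q = l q s
  eq_zero : ∀ s q, L ≤ s ∨ L ≤ q → l s q = 0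

lemma IsLogWeight.exists_mem_Icc (hl : IsLogWeight l L) : ∃ B > 0, ∀ s q, l s q ∈ Set.Icc 0 B := by
  have hsum (s) : 0 ≤ ∑ q ∈ range L, l s q := sum_nonneg fun q _ => hl.nonneg s q
  refine ⟨(∑ s ∈ range L, ∑ q ∈ range L, l s q) + 1,
    add_pos_of_nonneg_of_pos (sum_nonneg fun s _ => hsum s) one_pos, fun s q => ⟨hl.nonneg s q, ?_⟩⟩
  have hle : l s q ≤ ∑ s ∈ range L, ∑ q ∈ range L, l s q := by
    by_cases h : L ≤ s ∨ L ≤ q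
    · rw [hl.eq_zero s q h]
      exact sum_nonneg fun s _ => hsum s
    · push Not at h
      exact (single_le_sum (f := l s) (fun q _ => hl.nonneg s q) (mem_range.mpr h.2)).trans
        (single_le_sum (f := fun s => ∑ q ∈ range L, l s q) (fun s _ => hsum s)
          (mem_range.mpr h.1))
  linarith

theorem formulaProb_isSat_typical_le (hl : IsLogWeight l L)
    (h : IsFirstMomentRate r (fun s q => Real.exp (l s q)) L η R) (hη₀ : 0 < η) (hη₁ : η ≤ 1)
    (hr : 1 ≤ r) (hn : 1 ≤ n) (hm₁ : r * n ≤ m) (hm₂ : (m : ℝ) ≤ r * n + 1) (ε M : ℝ) :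
    formulaProb (fun F : Formula m n => (∃ A, (truthPattern A F).IsSat) ∧
        numRepetitive F ≤ ε * n ∧ n * M ≤ formulaLogWeight l F) ≤
      polyFactor m * Real.exp (R - M - ε * Real.log η) ^ n := by
  classical
  set c : ℕ → ℕ → ℝ := fun s q => Real.exp (l s q)
  have hweight (F : Formula m n) : η ^ numRepetitive F * formulaWeight c F =
      Real.exp (numRepetitive F * Real.log η + formulaLogWeight l F) := by
    rw [Real.exp_add, Real.exp_nat_mul, Real.exp_log hη₀, formulaLogWeight, Real.exp_sum,
      formulaWeight]
  have hmarkov := formulaProb_mul_le (a := Real.exp (n * (M + ε * Real.log η)))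
    (P := fun F : Formula m n => (∃ A, (truthPattern A F).IsSat) ∧
      numRepetitive F ≤ ε * n ∧ n * M ≤ formulaLogWeight l F)
    (g := fun F => if ∃ A, (truthPattern A F).IsSat then
      η ^ numRepetitive F * formulaWeight c F else 0)
    (fun F => by rw [hweight]; positivity)
    fun F ⟨hsat, hrep, _⟩ => by
      rw [if_pos hsat, hweight, Real.exp_le_exp]
      linarith [mul_le_mul_of_nonpos_right hrep (Real.log_nonpos hη₀.le hη₁)]
  have hfirst := h.sum_pow_numRepetitive_mul_formulaWeight_le
    (fun s q => Real.one_le_exp (hl.nonneg s q)) (fun s q => congrArg Real.exp (hl.symm s q))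
    (fun s q hsq => (Real.exp_eq_one_iff _).mpr (hl.eq_zero s q hsq)) hη₀.le hη₁ hr hn hm₁ hm₂
  have hsplit : Real.exp (R - M - ε * Real.log η) ^ n =
      Real.exp R ^ n / Real.exp (n * (M + ε * Real.log η)) := by
    rw [← Real.exp_nat_mul, ← Real.exp_nat_mul, ← Real.exp_sub]
    congr 1
    ring
  rw [← sum_filter] at hmarkov
  rw [hsplit, ← mul_div_assoc, le_div_iff₀ (Real.exp_pos _)]
  exact hmarkov.trans (div_le_of_le_mul₀ (by positivity) (by unfold polyFactor; positivity) hfirst)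

end LogWeight

section Threshold

variable {r : ℝ} {l : ℕ → ℕ → ℝ} {L : ℕ} {η R : ℝ}

lemma tendsto_polyFactor_mul_exp_pow (hr : 0 ≤ r) {a : ℝ} (ha : 0 < a) :
    Tendsto (fun n : ℕ => polyFactor ⌈r * n⌉₊ * Real.exp (-a) ^ n) atTop (nhds 0) := by
  set C := (Real.exp 1 * (3 * r + 4)) ^ 8 * Real.exp 6
  have hlim : Tendsto (fun n : ℕ => C * ((n : ℝ) ^ 8 * Real.exp (-a) ^ n)) atTop (nhds 0) := by
    simpa using (tendsto_pow_const_mul_const_pow_of_lt_one 8 (Real.exp_pos _).le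
      (Real.exp_lt_one_iff.mpr (neg_neg_of_pos ha))).const_mul C
  refine tendsto_of_tendsto_of_tendsto_of_le_of_le' tendsto_const_nhds hlim
    (Eventually.of_forall fun n => by unfold polyFactor; positivity) ?_
  filter_upwards [eventually_ge_atTop 1] with n hn
  have hn' : (1 : ℝ) ≤ n := mod_cast hn
  have hceil : 3 * (⌈r * n⌉₊ : ℝ) + 1 ≤ (3 * r + 4) * n := by
    nlinarith [Nat.ceil_lt_add_one (by positivity : 0 ≤ r * n)]
  calc _ ≤ (Real.exp 1 * ((3 * r + 4) * n)) ^ 8 * Real.exp 6 * Real.exp (-a) ^ n := by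
        unfold polyFactor
        gcongr
    _ = _ := by simp only [C]; ring

lemma tendsto_formulaProb_lt_numRepetitive (hr : 0 ≤ r) {ε : ℝ} (hε : 0 < ε) :
    Tendsto (fun n : ℕ => formulaProb fun F : Formula ⌈r * n⌉₊ n => ε * n < numRepetitive F)
      atTop (nhds 0) := by
  have hlim : Tendsto (fun n : ℕ => 6 * (r + 1) / ε / n) atTop (nhds 0) :=
    tendsto_const_div_atTop_nhds_zero_nat _
  refine tendsto_of_tendsto_of_tendsto_of_le_of_le' tendsto_const_nhds hlim
    (Eventually.of_forall fun n => formulaProb_nonneg _) ?_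
  filter_upwards [eventually_ge_atTop 1] with n hn
  have hn' : (1 : ℝ) ≤ n := mod_cast hn
  set m := ⌈r * n⌉₊
  have hm : (m : ℝ) ≤ (r + 1) * n := by
    linarith [Nat.ceil_lt_add_one (by positivity : 0 ≤ r * n)]
  have hmarkov := formulaProb_mul_le (P := fun F : Formula m n => ε * n < numRepetitive F)
    (g := fun F => numRepetitive F) (fun F => Nat.cast_nonneg _) fun F hF => hF.le
  have hsum := sum_numRepetitive_mul_le (m := m) (n := n)
  have hmean : (∑ F : Formula m n, (numRepetitive F : ℝ)) / (2 * n) ^ (3 * m) ≤ 6 * m / n := by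
    rw [div_le_div_iff₀ (by positivity) (by positivity)]
    exact_mod_cast hsum
  rw [div_div, le_div_iff₀ (by positivity)]
  calc _ ≤ 6 * (m : ℝ) / n := hmarkov.trans hmean
    _ ≤ 6 * ((r + 1) * n) / n := by gcongr
    _ = _ := by field_simp

lemma IsLogWeight.tendsto_formulaProb_lt (hl : IsLogWeight l L) (hr : 1 ≤ r) {ε : ℝ}
    (hε : 0 < ε) :
    Tendsto (fun n : ℕ => formulaProb fun F : Formula ⌈r * n⌉₊ n =>
      formulaLogWeight l F < n * (poissonMean l L (3 * r / 2) - ε)) atTop (nhds 0) := by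
  obtain ⟨B, hB, hlB⟩ := hl.exists_mem_Icc
  set u := ε / (2 * B ^ 2)
  have hexponent : u ^ 2 * B ^ 2 - u * ε = -(ε ^ 2 / (4 * B ^ 2)) := by
    simp only [u]; field_simp; ring
  have hlim := tendsto_polyFactor_mul_exp_pow (by linarith : 0 ≤ r)
    (by positivity : 0 < ε ^ 2 / (4 * B ^ 2))
  refine tendsto_of_tendsto_of_tendsto_of_le_of_le' tendsto_const_nhds hlim
    (Eventually.of_forall fun n => formulaProb_nonneg _) ?_
  filter_upwards [eventually_ge_atTop (max 1 L)] with n hn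
  have hLn : L ≤ n := (le_max_right _ _).trans hn
  have hnm : n ≤ ⌈r * n⌉₊ :=
    Nat.cast_le.mp ((le_mul_of_one_le_left n.cast_nonneg hr).trans (Nat.le_ceil _))
  rw [← hexponent]
  exact formulaProb_formulaLogWeight_lt_le hr ((le_max_left _ _).trans hn) (Nat.le_ceil _)
    (Nat.ceil_lt_add_one (by positivity)).le hlB (by omega) (by positivity) ε

theorem tendsto_formulaProb_isSat (hr : 1 ≤ r) (hl : IsLogWeight l L) (hη₀ : 0 < η) (hη₁ : η ≤ 1)
    (h : IsFirstMomentRate r (fun s q => Real.exp (l s q)) L η R)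
    (hR : R < poissonMean l L (3 * r / 2)) :
    Tendsto (fun n : ℕ => formulaProb fun F : Formula ⌈r * n⌉₊ n => ∃ A, (truthPattern A F).IsSat)
      atTop (nhds 0) := by
  have hr₀ : 0 ≤ r := by linarith
  set M := poissonMean l L (3 * r / 2)
  have : 0 < 1 - Real.log η := by linarith [Real.log_nonpos hη₀.le hη₁]
  set ε := (M - R) / (2 * (1 - Real.log η))
  have hε : 0 < ε := div_pos (sub_pos.mpr hR) (by positivity)
  have hexponent : R - (M - ε) - ε * Real.log η = -((M - R) / 2) := by
    simp only [ε]; field_simp; ring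
  have hlim := ((tendsto_polyFactor_mul_exp_pow hr₀ (half_pos (sub_pos.mpr hR))).add
    (tendsto_formulaProb_lt_numRepetitive hr₀ hε)).add (hl.tendsto_formulaProb_lt hr hε)
  simp only [add_zero] at hlim
  refine tendsto_of_tendsto_of_tendsto_of_le_of_le' tendsto_const_nhds hlim
    (Eventually.of_forall fun n => formulaProb_nonneg _) ?_
  filter_upwards [eventually_ge_atTop 1] with n hn
  have htypical := formulaProb_isSat_typical_le hl h hη₀ hη₁ hr hn (Nat.le_ceil _)
    (Nat.ceil_lt_add_one (by positivity)).le ε (M - ε)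
  rw [hexponent] at htypical
  calc _ ≤ formulaProb (fun F : Formula ⌈r * n⌉₊ n => ((∃ A, (truthPattern A F).IsSat) ∧
          numRepetitive F ≤ ε * n ∧ n * (M - ε) ≤ formulaLogWeight l F) ∨
          ε * n < numRepetitive F) +
        formulaProb (fun F : Formula ⌈r * n⌉₊ n => formulaLogWeight l F < n * (M - ε)) :=
        formulaProb_le_add fun F hsat => by
          by_cases hrep : (numRepetitive F : ℝ) ≤ ε * n <;>
            by_cases hlogw : n * (M - ε) ≤ formulaLogWeight l F <;> simp_all
    _ ≤ _ := by
        gcongr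
        exact (formulaProb_le_add fun F hF => hF).trans (by gcongr)

lemma formulaProb_eq_card_curried_div (m n : ℕ) :
    formulaProb (fun F : Formula m n => ∃ A, (truthPattern A F).IsSat) =
      Nat.card {F : Fin m → Fin 3 → Fin n × Bool //
        ∃ A : Fin n → Bool, ∀ i, ∃ j, A (F i j).1 = (F i j).2} / (2 * n) ^ (3 * m) := by
  rw [formulaProb]
  congr 2
  exact Nat.card_congr ((Equiv.curry _ _ _).subtypeEquiv fun F => by
    simp [truthPattern, Pattern.IsSat])

end Threshold

section Certificate

variable {p a b α : ℝ} {x : SlotType → ℝ}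

lemma convexOn_redundant_sub_mul {y z : ℝ} (hy : 0 < y) (hz : 0 < z) (α : ℝ) :
    ConvexOn ℝ (Set.Ici 0) fun w => 3 / (y ^ 2 * z) * w ^ 2 + 1 / y ^ 3 * w ^ 3 - α * w := by
  have hsq : ConvexOn ℝ (Set.Ici 0) fun w : ℝ => 3 / (y ^ 2 * z) * w ^ 2 :=
    (convexOn_pow 2).smul (c := 3 / (y ^ 2 * z)) (by positivity)
  have hcube : ConvexOn ℝ (Set.Ici 0) fun w : ℝ => 1 / y ^ 3 * w ^ 3 :=
    (convexOn_pow 3).smul (c := 1 / y ^ 3) (by positivity)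
  have hlin : ConcaveOn ℝ (Set.Ici 0) fun w : ℝ => α * w :=
    (LinearMap.mulLeft ℝ α).concaveOn (convex_Ici 0)
  exact (hsq.add hcube).sub hlin

lemma redundant_le_iff_odds {y z v : ℝ} (hp : 0 < p) (hα : α ≠ 0) :
    3 * ((1 - p) / y) ^ 2 * (p / z) + ((1 - p) / y) ^ 3 ≤ (1 - p * v / α) * (α * p ^ 2) ↔
      3 / (y ^ 2 * z) * ((1 - p) / p) ^ 2 + 1 / y ^ 3 * ((1 - p) / p) ^ 3 - α * ((1 - p) / p) ≤
        α - v := by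
  have hleft : 3 * ((1 - p) / y) ^ 2 * (p / z) + ((1 - p) / y) ^ 3 =
      p ^ 3 * (3 / (y ^ 2 * z) * ((1 - p) / p) ^ 2 + 1 / y ^ 3 * ((1 - p) / p) ^ 3) := by
    field_simp
  have hright : (1 - p * v / α) * (α * p ^ 2) = p ^ 3 * (α * ((1 - p) / p) + (α - v)) := by
    field_simp
    ring
  rw [hleft, hright, mul_le_mul_iff_right₀ (pow_pos hp 3), sub_le_iff_le_add']

/- In the variable `w = (1 - p) / p` the condition on redundant clauses bounds a convex function
from above, so it only has to hold at the two ends. -/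
lemma IsClauseBound.of_mem_Icc {v : ℝ} (hα : 0 < α) (ha : 0 < a) (hb : b ≤ 1)
    (h_a : IsClauseBound a x (1 - a * v / α) (α * a ^ 2))
    (h_b : IsClauseBound b x (1 - b * v / α) (α * b ^ 2)) (hp : p ∈ Set.Icc a b) :
    IsClauseBound p x (1 - p * v / α) (α * p ^ 2) := by
  have hp₀ : 0 < p := ha.trans_le hp.1
  have hv : 0 < v := by
    have := sub_lt_self_iff _ |>.mp h_a.t_lt_one
    exact pos_of_mul_pos_right ((div_pos_iff_of_pos_right hα).mp this) ha.le
  have hodds {u w : ℝ} (hu : 0 < u) (huw : u ≤ w) : (1 - w) / w ≤ (1 - u) / u := by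
    rw [div_le_div_iff₀ (hu.trans_le huw) hu]
    linarith
  have hodds_b : 0 ≤ (1 - b) / b :=
    div_nonneg (sub_nonneg.mpr hb) (hp₀.le.trans hp.2)
  refine ⟨h_a.pos, ?_, sub_lt_self _ (by positivity), ?_, ?_⟩
  · refine h_b.t_pos.trans_le (sub_le_sub_left ?_ 1)
    gcongr
    exact hp.2
  · have hcritical := h_a.critical_le
    have hsplit (u : ℝ) : 3 * (u / x falsified) ^ 2 / x critical =
        3 / (x falsified ^ 2 * x critical) * u ^ 2 := by
      field_simp
    rw [hsplit] at hcritical ⊢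
    gcongr
    exact le_of_mul_le_mul_right hcritical (by positivity)
  · rw [redundant_le_iff_odds hp₀ hα.ne']
    have hmem_b : (1 - b) / b ∈ Set.Ici (0 : ℝ) := hodds_b
    have hmem_a : (1 - a) / a ∈ Set.Ici (0 : ℝ) := hodds_b.trans (hodds ha (hp.1.trans hp.2))
    exact ((convexOn_redundant_sub_mul (h_a.pos _) (h_a.pos _) α).le_max_of_mem_Icc hmem_b hmem_a
      ⟨hodds hp₀ hp.2, hodds ha hp.1⟩).trans <| max_le
        ((redundant_le_iff_odds (hp₀.trans_le hp.2) hα.ne').mp h_b.redundant_le)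
        ((redundant_le_iff_odds ha hα.ne').mp h_a.redundant_le)

lemma isClauseBound_iff {K : Type*} [Field K] [LinearOrder K] {p : K} {x : SlotType → K} {t A : K} :
    IsClauseBound p x t A ↔ (∀ s, 0 < x s) ∧ 0 < t ∧ t < 1 ∧
      3 * (p / x falsified) ^ 2 / x critical ≤ A ∧
      3 * ((1 - p) / x redundant) ^ 2 * (p / x falsified) + ((1 - p) / x redundant) ^ 3 ≤ t * A :=
  ⟨fun h => ⟨h.pos, h.t_pos, h.t_lt_one, h.critical_le, h.redundant_le⟩,
    fun ⟨h₁, h₂, h₃, h₄, h₅⟩ => ⟨h₁, h₂, h₃, h₄, h₅⟩⟩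

instance {K : Type*} [Field K] [LinearOrder K] (p : K) (x : SlotType → K) (t A : K) :
    Decidable (IsClauseBound p x t A) :=
  decidable_of_iff' _ isClauseBound_iff

lemma IsClauseBound.ratCast {p : ℚ} {x : SlotType → ℚ} {t A : ℚ} (h : IsClauseBound p x t A) :
    IsClauseBound (p : ℝ) (fun s => (x s : ℝ)) t A where
  pos s := mod_cast h.pos s
  t_pos := mod_cast h.t_pos
  t_lt_one := mod_cast h.t_lt_one
  critical_le := mod_cast h.critical_le
  redundant_le := mod_cast h.redundant_le

lemma egfExcess_ratCast (c : ℕ → ℕ → ℚ) (L : ℕ) (η : ℚ) (x : SlotType → ℚ) :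
    ((egfExcess c L η x : ℚ) : ℝ) =
      egfExcess (fun s q => (c s q : ℝ)) L (η : ℝ) fun s => (x s : ℝ) := by
  simp only [egfExcess]
  push_cast
  rfl

end Certificate

section OptimisedWeight

/-- The lower triangle of a symmetric matrix of weight exponents. It was found by numerical
optimisation. -/
def exponentTable : List (List ℕ) :=
  [[2152],
   [2137, 2125],
   [2123, 2116, 2109],
   [2108, 2106, 2103, 2099],
   [2094, 2095, 2096, 2095, 2093],
   [2079, 2084, 2087, 2089, 2090, 2089],
   [2064, 2072, 2078, 2082, 2085, 2086, 2086],
   [2050, 2059, 2067, 2074, 2079, 2083, 2085, 2085],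
   [2035, 2046, 2055, 2064, 2071, 2077, 2081, 2084, 2085],
   [2020, 2032, 2043, 2054, 2063, 2070, 2076, 2081, 2084, 2085],
   [2006, 2019, 2031, 2042, 2053, 2062, 2070, 2076, 2081, 2084, 2085],
   [1991, 2005, 2018, 2030, 2042, 2053, 2062, 2070, 2077, 2082, 2085, 2086],
   [1976, 1991, 2005, 2018, 2030, 2042, 2053, 2063, 2071, 2078, 2083, 2086, 2088],
   [1962, 1977, 1991, 2005, 2018, 2031, 2043, 2054, 2063, 2072, 2079, 2084, 2087, 2089],
   [1947, 1962, 1977, 1992, 2006, 2019, 2032, 2044, 2055, 2065, 2073, 2080, 2085, 2089, 2091],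
   [1933, 1948, 1963, 1978, 1993, 2007, 2020, 2033, 2045, 2056, 2066, 2074, 2081, 2087, 2090, 2092],
   [1918, 1934, 1949, 1964, 1979, 1994, 2008, 2022, 2034, 2046, 2057, 2067, 2076, 2083, 2088,
    2092, 2094],
   [1903, 1919, 1935, 1950, 1966, 1981, 1995, 2009, 2023, 2036, 2048, 2059, 2069, 2078, 2085,
    2090, 2094, 2096],
   [1889, 1905, 1921, 1936, 1952, 1967, 1982, 1997, 2011, 2025, 2037, 2050, 2061, 2071, 2079,
    2086, 2092, 2095, 2097],
   [1874, 1890, 1906, 1922, 1938, 1953, 1969, 1984, 1998, 2013, 2026, 2039, 2051, 2062, 2072,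
    2081, 2088, 2094, 2097, 0],
   [1859, 1876, 1892, 1908, 1924, 1939, 1955, 1970, 1985, 2000, 2014, 2028, 2041, 2053, 2064,
    2074, 2083, 2090, 0, 0, 0],
   [1845, 1861, 1877, 1893, 1909, 1925, 1941, 1957, 1972, 1987, 2002, 2016, 2030, 2043, 2055,
    2066, 2076, 0, 0, 0, 0, 0],
   [0, 1846, 1863, 1879, 1895, 1911, 1927, 1943, 1958, 1974, 1989, 2004, 2018, 2031, 2044, 0, 0,
    0, 0, 0, 0, 0, 0],
   [0, 0, 1848, 1864, 1881, 1897, 1913, 1929, 1945, 1960, 1976, 1991, 2005, 2020, 0, 0, 0, 0, 0,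
    0, 0, 0, 0, 0],
   [0, 0, 0, 1850, 1866, 1882, 1899, 1915, 1931, 1946, 1962, 0, 0, 0, 0, 0, 0, 0, 0, 0, 0, 0, 0,
    0, 0],
   [0, 0, 0, 0, 0, 0, 1884, 0, 0, 0, 0, 0, 0, 0, 0, 0, 0, 0, 0, 0, 0, 0, 0, 0, 0, 0]]

/-- The exponent of `129 / 128` in the weight of a variable with `s` and `q` occurrences of its two
literals. -/
def weightExponent (s q : ℕ) : ℕ := (exponentTable.getD (max s q) []).getD (min s q) 0

lemma weightExponent_symm (s q : ℕ) : weightExponent s q = weightExponent q s := by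
  rw [weightExponent, weightExponent, max_comm, min_comm]

lemma weightExponent_eq_zero {s q : ℕ} (h : 26 ≤ s ∨ 26 ≤ q) : weightExponent s q = 0 := by
  rw [weightExponent, List.getD_eq_default exponentTable [] (le_max_iff.mpr h)]
  rfl

/-- The logarithm of the weight of a variable with `s` and `q` occurrences of its two literals. -/
noncomputable def logWeight (s q : ℕ) : ℝ := weightExponent s q * Real.log (129 / 128)

lemma isLogWeight_logWeight : IsLogWeight logWeight 26 where
  nonneg s q := mul_nonneg (Nat.cast_nonneg _) (Real.log_nonneg (by norm_num))
  symm s q := by rw [logWeight, weightExponent_symm, logWeight]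
  eq_zero s q h := by rw [logWeight, weightExponent_eq_zero h, Nat.cast_zero, zero_mul]

lemma exp_logWeight (s q : ℕ) :
    Real.exp (logWeight s q) = (((129 / 128) ^ weightExponent s q : ℚ) : ℝ) := by
  rw [logWeight, Real.exp_nat_mul, Real.exp_log (by norm_num)]
  norm_num

lemma le_sum_weightExponent_mul :
    1540930049 ≤ ∑ s ∈ range 26, ∑ q ∈ range 26,
      (weightExponent s q : ℚ) * (6.759 ^ s / s ! * (6.759 ^ q / q !)) := by
  decide +kernel

lemma le_log_129_div_128 : 0.0077821404 ≤ Real.log (129 / 128) := by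
  rw [Real.le_log_iff_exp_le (by norm_num)]
  refine (Real.exp_bound' (by norm_num) (by norm_num) (n := 6) (by norm_num)).trans ?_
  norm_num [sum_range_succ, Nat.factorial]

lemma exp_13_518_le : Real.exp 13.518 ≤ 2.7182818286 ^ 13 * 1.678666957 := by
  have hexp : Real.exp 13.518 = Real.exp 1 ^ 13 * Real.exp 0.518 := by
    rw [← Real.exp_nat_mul, ← Real.exp_add]
    norm_num
  have hfrac : Real.exp 0.518 ≤ 1.678666957 := by
    refine (Real.exp_bound' (by norm_num) (by norm_num) (n := 10) (by norm_num)).trans ?_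
    norm_num [sum_range_succ, Nat.factorial]
  rw [hexp]
  gcongr
  exact Real.exp_one_lt_d9.le

lemma lt_poissonMean_logWeight : 16.14689 < poissonMean logWeight 26 (3 * 4.506 / 2) := by
  have hsum : (1540930049 : ℝ) ≤ ∑ s ∈ range 26, ∑ q ∈ range 26,
      (weightExponent s q : ℝ) * (6.759 ^ s / s ! * (6.759 ^ q / q !)) := by
    have := Rat.cast_le (K := ℝ) |>.mpr le_sum_weightExponent_mul
    push_cast at this
    exact this
  have hmean : ∑ s ∈ range 26, ∑ q ∈ range 26,
      logWeight s q * (6.759 ^ s / s ! * (6.759 ^ q / q !)) =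
      Real.log (129 / 128) * ∑ s ∈ range 26, ∑ q ∈ range 26,
        (weightExponent s q : ℝ) * (6.759 ^ s / s ! * (6.759 ^ q / q !)) := by
    simp only [logWeight, mul_sum]
    exact sum_congr rfl fun s _ => sum_congr rfl fun q _ => by ring
  rw [poissonMean, show (3 * 4.506 / 2 : ℝ) = 6.759 by norm_num, hmean,
    lt_div_iff₀ (Real.exp_pos _)]
  calc 16.14689 * Real.exp (2 * 6.759)
      ≤ 16.14689 * (2.7182818286 ^ 13 * 1.678666957) := by
        rw [show (2 * 6.759 : ℝ) = 13.518 by norm_num]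
        gcongr
        exact exp_13_518_le
    _ < 0.0077821404 * 1540930049 := by norm_num
    _ ≤ _ := mul_le_mul le_log_129_div_128 hsum (by norm_num) (Real.log_nonneg (by norm_num))

end OptimisedWeight

section Cells

/-- The critical, redundant and falsified coordinates of a saddle point. -/
def saddle (x y z : ℚ) : SlotType → ℚ
  | critical => x
  | redundant => y
  | falsified => z

/-- A numerical certificate that the generating function bound at `x` is at most `U`, and that
`U * q ^ 4.506` does not exceed `7.6436e12 < exp (16.14689 + 3 * 4.506)`. -/
structure IsGrowthCertificate (x : SlotType → ℚ) (q U : ℚ) : Prop where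
  sum_le : x critical + x redundant + x falsified ≤ 16
  egfExcess_le :
    egfExcess (fun s q => (129 / 128) ^ weightExponent s q) 26 (1 / 2 ^ 30) x + 2 * 2.7183 ^ 16 ≤ U
  nonneg : 0 ≤ U
  rate_pos : 0 < q
  rate_le_one : q ≤ 1
  pow_mul_pow_le : U ^ 500 * q ^ 2253 ≤ 7.6436e12 ^ 500

instance (x : SlotType → ℚ) (q U : ℚ) : Decidable (IsGrowthCertificate x q U) :=
  decidable_of_iff (x critical + x redundant + x falsified ≤ 16 ∧
      egfExcess (fun s q => (129 / 128) ^ weightExponent s q) 26 (1 / 2 ^ 30) x +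
        2 * 2.7183 ^ 16 ≤ U ∧
      0 ≤ U ∧ 0 < q ∧ q ≤ 1 ∧ U ^ 500 * q ^ 2253 ≤ 7.6436e12 ^ 500)
    ⟨fun ⟨h₁, h₂, h₃, h₄, h₅, h₆⟩ => ⟨h₁, h₂, h₃, h₄, h₅, h₆⟩,
      fun ⟨h₁, h₂, h₃, h₄, h₅, h₆⟩ => ⟨h₁, h₂, h₃, h₄, h₅, h₆⟩⟩

lemma le_exp_29_66489 : 7.6436e12 ≤ Real.exp 29.66489 := by
  have hexp : Real.exp 29.66489 = Real.exp 1 ^ 29 * Real.exp 0.66489 := by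
    rw [← Real.exp_nat_mul, ← Real.exp_add]
    norm_num
  have hfrac : 1.9442764 ≤ Real.exp 0.66489 := by
    refine le_trans ?_ (Real.sum_le_exp_of_nonneg (by norm_num) 10)
    norm_num [sum_range_succ, Nat.factorial]
  calc (7.6436e12 : ℝ) ≤ 2.7182818283 ^ 29 * 1.9442764 := by norm_num
    _ ≤ _ := by
      rw [hexp]
      gcongr
      exact Real.exp_one_gt_d9.le

lemma clauseRate_le_div_exp {r t A q : ℝ} (h : r ^ 3 * (A / (1 - t) ^ 2) ≤ 2 * q) :
    clauseRate r t A ≤ q / Real.exp 3 := by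
  rw [clauseRate, div_le_div_iff₀ (by positivity) (by positivity)]
  linarith [mul_le_mul_of_nonneg_right h (Real.exp_pos 3).le]

namespace IsGrowthCertificate

variable {x : SlotType → ℚ} {q U : ℚ}

lemma egfBound_le (h : IsGrowthCertificate x q U) :
    egfBound (fun s q => Real.exp (logWeight s q)) 26 (1 / 2 ^ 30) (fun s => (x s : ℝ)) ≤ U := by
  have hexp : Real.exp (x critical + x redundant + x falsified) ≤ (2.7183 : ℚ) ^ 16 := by
    calc Real.exp (x critical + x redundant + x falsified)
        ≤ Real.exp ((16 : ℕ) * 1) := Real.exp_le_exp.mpr (by exact_mod_cast h.sum_le)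
      _ = Real.exp 1 ^ 16 := Real.exp_nat_mul 1 16
      _ ≤ _ := by
        gcongr
        exact Real.exp_one_lt_d9.le.trans (by norm_num)
  have hU := Rat.cast_le (K := ℝ) |>.mpr h.egfExcess_le
  rw [Rat.cast_add, egfExcess_ratCast] at hU
  simp only [egfBound, exp_logWeight]
  push_cast at hU hexp ⊢
  linarith

lemma mul_rpow_le (h : IsGrowthCertificate x q U) :
    (U : ℝ) * (q : ℝ) ^ (4.506 : ℝ) ≤ Real.exp 29.66489 := by
  have hq : (0 : ℝ) < q := mod_cast h.rate_pos
  have hpow : (U : ℝ) ^ 500 * (q : ℝ) ^ 2253 ≤ 7.6436e12 ^ 500 := by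
    have := Rat.cast_le (K := ℝ) |>.mpr h.pow_mul_pow_le
    push_cast at this
    exact this
  refine le_trans (le_of_pow_le_pow_left₀ (n := 500) (by norm_num) (by norm_num) ?_)
    le_exp_29_66489
  rwa [mul_pow, ← Real.rpow_mul_natCast hq.le,
    show (4.506 : ℝ) * (500 : ℕ) = (2253 : ℕ) by norm_num, Real.rpow_natCast]

lemma firstMomentRate_le (h : IsGrowthCertificate x q U) {t A : ℝ} (hA : 0 ≤ A)
    (hrate : 4.506 ^ 3 * (A / (1 - t) ^ 2) ≤ 2 * q) :
    clauseRate 4.506 t A ≤ 1 ∧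
      egfBound (fun s q => Real.exp (logWeight s q)) 26 (1 / 2 ^ 30) (fun s => (x s : ℝ)) *
        clauseRate 4.506 t A ^ (4.506 : ℝ) ≤ Real.exp 16.14689 := by
  have hU : (0 : ℝ) ≤ U := mod_cast h.nonneg
  have hq₀ : (0 : ℝ) < q := mod_cast h.rate_pos
  have hq₁ : (q : ℝ) ≤ Real.exp 3 :=
    le_trans (mod_cast h.rate_le_one) (Real.one_le_exp (by norm_num))
  have hle := clauseRate_le_div_exp hrate
  have hnonneg : 0 ≤ clauseRate 4.506 t A := by
    unfold clauseRate
    positivity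
  refine ⟨hle.trans (div_le_one_of_le₀ hq₁ (by positivity)), ?_⟩
  calc _ ≤ U * (q / Real.exp 3) ^ (4.506 : ℝ) := by
        gcongr
        exact h.egfBound_le
    _ = U * (q : ℝ) ^ (4.506 : ℝ) / Real.exp (3 * 4.506) := by
        rw [Real.div_rpow hq₀.le (Real.exp_pos 3).le, ← Real.exp_mul, mul_div_assoc]
    _ ≤ Real.exp 29.66489 / Real.exp (3 * 4.506) := by
        gcongr
        exact h.mul_rpow_le
    _ = Real.exp 16.14689 := by
        rw [← Real.exp_sub]
        norm_num

end IsGrowthCertificate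

/-- An interval `[a, b]` of fractions of falsified slots with a saddle point `(x, y, z)` for it and
the parameters of the bounds it certifies: `v` determines the tilt `t`, `q` bounds the clause rate
and `U` the generating function. -/
structure Cell where
  (a b x y z v q U : ℚ)

namespace Cell

/-- The smallest `α` for which `A = α * p ^ 2` is admissible in `IsClauseBound.critical_le`. -/
def criticalCoeff (c : Cell) : ℚ := 3 / (c.x * c.z ^ 2)

/-- The clause bound of a cell holds at the fraction `p`. -/
def IsAdmissibleAt (c : Cell) (p : ℚ) : Prop :=
  IsClauseBound p (saddle c.x c.y c.z) (1 - p * c.v / c.criticalCoeff) (c.criticalCoeff * p ^ 2)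

instance (c : Cell) (p : ℚ) : Decidable (c.IsAdmissibleAt p) :=
  inferInstanceAs (Decidable (IsClauseBound _ _ _ _))

/-- The inequalities between rationals that certify a cell. -/
structure IsCertified (c : Cell) : Prop where
  pos : 0 < c.a
  le_one : c.b ≤ 1
  criticalCoeff_pos : 0 < c.criticalCoeff
  left : c.IsAdmissibleAt c.a
  right : c.IsAdmissibleAt c.b
  rate_le : 4.506 ^ 3 * (c.criticalCoeff ^ 3 / c.v ^ 2) ≤ 2 * c.q
  growth : IsGrowthCertificate (saddle c.x c.y c.z) c.q c.U

instance (c : Cell) : Decidable c.IsCertified :=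
  decidable_of_iff (0 < c.a ∧ c.b ≤ 1 ∧ 0 < c.criticalCoeff ∧ c.IsAdmissibleAt c.a ∧
      c.IsAdmissibleAt c.b ∧ 4.506 ^ 3 * (c.criticalCoeff ^ 3 / c.v ^ 2) ≤ 2 * c.q ∧
      IsGrowthCertificate (saddle c.x c.y c.z) c.q c.U)
    ⟨fun ⟨h₁, h₂, h₃, h₄, h₅, h₆, h₇⟩ => ⟨h₁, h₂, h₃, h₄, h₅, h₆, h₇⟩,
      fun ⟨h₁, h₂, h₃, h₄, h₅, h₆, h₇⟩ => ⟨h₁, h₂, h₃, h₄, h₅, h₆, h₇⟩⟩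

lemma IsAdmissibleAt.ratCast {c : Cell} {p : ℚ} (h : c.IsAdmissibleAt p) :
    IsClauseBound (p : ℝ) (fun s => (saddle c.x c.y c.z s : ℝ))
      (1 - p * c.v / c.criticalCoeff) (c.criticalCoeff * p ^ 2) := by
  simpa only [Rat.cast_sub, Rat.cast_one, Rat.cast_div, Rat.cast_mul, Rat.cast_pow]
    using IsClauseBound.ratCast h

lemma IsCertified.exists_isClauseBound {c : Cell} (h : c.IsCertified) {p : ℝ}
    (hp : p ∈ Set.Icc (c.a : ℝ) c.b) :
    ∃ x t A, IsClauseBound p x t A ∧ clauseRate 4.506 t A ≤ 1 ∧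
      egfBound (fun s q => Real.exp (logWeight s q)) 26 (1 / 2 ^ 30) x *
        clauseRate 4.506 t A ^ (4.506 : ℝ) ≤ Real.exp 16.14689 := by
  have ha : (0 : ℝ) < c.a := mod_cast h.pos
  have hp₀ : 0 < p := ha.trans_le hp.1
  have hα : (0 : ℝ) < c.criticalCoeff := mod_cast h.criticalCoeff_pos
  have hbound :=
    IsClauseBound.of_mem_Icc hα ha (mod_cast h.le_one) h.left.ratCast h.right.ratCast hp
  refine ⟨_, _, _, hbound, h.growth.firstMomentRate_le hbound.nonneg ?_⟩
  have hrate : (c.criticalCoeff : ℝ) * p ^ 2 / (1 - (1 - p * c.v / c.criticalCoeff)) ^ 2 =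
      c.criticalCoeff ^ 3 / c.v ^ 2 := by
    rw [sub_sub_cancel]
    field_simp
  have := Rat.cast_le (K := ℝ) |>.mpr h.rate_le
  rw [hrate]
  push_cast at this
  exact this

end Cell

/-- A cover of `[0.0053, 1]` by cells. It was found by numerical optimisation. -/
def cells : List Cell :=
  [⟨0.0053, 0.0115, 0.113, 13.586, 1.136, 741.4669, 0.7244668, 2.6853483e13⟩,
   ⟨0.0115, 0.0251, 0.211, 12.853, 1.596, 102.1987, 0.7616789, 2.5229380e13⟩,
   ⟨0.0251, 0.0544, 0.373, 11.874, 2.2, 16.61466, 0.7604346, 2.3316219e13⟩,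
   ⟨0.0544, 0.1135, 0.616, 10.633, 2.949, 3.206785, 0.7812264, 2.0951727e13⟩,
   ⟨0.1135, 0.2144, 0.93, 9.206, 3.804, 0.7856979, 0.8209265, 1.8296369e13⟩,
   ⟨0.2144, 0.3381, 1.267, 7.817, 4.643, 0.2673345, 0.8481553, 1.5994337e13⟩,
   ⟨0.3381, 0.4171, 1.535, 6.833, 5.242, 0.1380269, 0.8639183, 1.4769739e13⟩,
   ⟨0.4171, 0.4607, 1.698, 6.294, 5.569, 0.09858676, 0.8701494, 1.4301151e13⟩,
   ⟨0.4607, 0.4844, 1.789, 6.008, 5.742, 0.08303811, 0.8728554, 1.4105244e13⟩,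
   ⟨0.4844, 0.4973, 1.84, 5.854, 5.835, 0.07581552, 0.8739619, 1.4024925e13⟩,
   ⟨0.4973, 0.5043, 1.867, 5.771, 5.885, 0.07227149, 0.8747049, 1.3971954e13⟩,
   ⟨0.5043, 0.5083, 1.883, 5.725, 5.913, 0.07033764, 0.8748499, 1.3961683e13⟩,
   ⟨0.5083, 0.5106, 1.892, 5.699, 5.929, 0.06927029, 0.8749057, 1.3957557e13⟩,
   ⟨0.5106, 0.5124, 1.898, 5.682, 5.939, 0.06859030, 0.8750107, 1.3950138e13⟩,
   ⟨0.5124, 0.5141, 1.902, 5.668, 5.947, 0.06808592, 0.8753335, 1.3926872e13⟩,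
   ⟨0.5141, 0.5163, 1.908, 5.652, 5.957, 0.06742771, 0.8752454, 1.3933189e13⟩,
   ⟨0.5163, 0.52, 1.916, 5.627, 5.972, 0.06649210, 0.8755117, 1.3914095e13⟩,
   ⟨0.52, 0.5265, 1.931, 5.585, 5.998, 0.06486896, 0.8754834, 1.3915927e13⟩,
   ⟨0.5265, 0.5383, 1.957, 5.509, 6.044, 0.06212597, 0.8758743, 1.3887501e13⟩,
   ⟨0.5383, 0.5599, 2.006, 5.371, 6.127, 0.05744793, 0.8763519, 1.3853529e13⟩,
   ⟨0.5599, 0.5986, 2.096, 5.121, 6.279, 0.04996659, 0.8766600, 1.3827207e13⟩,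
   ⟨0.5986, 0.6669, 2.264, 4.674, 6.55, 0.03921695, 0.8763602, 1.3853478e13⟩,
   ⟨0.6669, 0.7784, 2.573, 3.894, 7.031, 0.02623565, 0.8719704, 1.4167062e13⟩,
   ⟨0.7784, 0.9256, 3.108, 2.619, 7.846, 0.01434149, 0.8574049, 1.5266327e13⟩,
   ⟨0.9256, 1, 3.76, 1.107, 8.858, 0.008817525, 0.6186377, 1.7022604e13⟩]

lemma isCertified_of_mem_cells : ∀ c ∈ cells, c.IsCertified := by
  decide +kernel

lemma exists_mem_Icc_of_isChain {ι α : Type*} [LinearOrder α] {f g : ι → α} {p : α} {l : List ι}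
    (hl : l ≠ []) (hchain : l.IsChain fun c d => f d ≤ g c) (hhead : f (l.head hl) ≤ p)
    (hlast : p ≤ g (l.getLast hl)) : ∃ c ∈ l, p ∈ Set.Icc (f c) (g c) := by
  induction l with
  | nil => exact absurd rfl hl
  | cons c l ih =>
    rcases le_or_gt p (g c) with hp | hp
    · exact ⟨c, List.mem_cons_self, hhead, hp⟩
    · cases l with
      | nil => exact absurd hlast hp.not_ge
      | cons d l =>
        obtain ⟨hcd, htail⟩ := List.isChain_cons_cons.mp hchain
        obtain ⟨e, he, hpe⟩ := ih (List.cons_ne_nil d l) htail (hcd.trans hp.le)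
          (by rwa [List.getLast_cons_cons] at hlast)
        exact ⟨e, List.mem_cons_of_mem c he, hpe⟩

lemma exists_mem_cells {p : ℝ} (hp : p ∈ Set.Icc 0.0053 1) :
    ∃ c ∈ cells, p ∈ Set.Icc (c.a : ℝ) c.b := by
  have hchain : cells.IsChain fun c d => d.a ≤ c.b := by decide +kernel
  have hne : cells ≠ [] := List.cons_ne_nil _ _
  have hhead : (cells.head hne).a = 0.0053 := rfl
  have hlast : (cells.getLast hne).b = 1 := rfl
  refine exists_mem_Icc_of_isChain hne (hchain.imp fun _ _ h => Rat.cast_le.mpr h) ?_ ?_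
  · rw [hhead]
    exact le_trans (by norm_num) hp.1
  · rw [hlast, Rat.cast_one]
    exact hp.2

/- As `p → 0` no cell of positive length works, because `A = α * p ^ 2` vanishes while redundant
clauses still contribute; a constant `A` does. -/
lemma isClauseBound_of_le {p : ℝ} (hp : p ∈ Set.Icc 0 0.0053) :
    IsClauseBound p (fun s => (saddle 0.05 14 1.136 s : ℝ)) 0.335 0.0013061 := by
  have hsq : (1 - p) ^ 2 ≤ 1 := pow_le_one₀ (by linarith [hp.2]) (by linarith [hp.1])
  have hcube : (1 - p) ^ 3 ≤ 1 := pow_le_one₀ (by linarith [hp.2]) (by linarith [hp.1])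
  have hcritical : ((saddle 0.05 14 1.136 critical : ℚ) : ℝ) = 0.05 := by norm_num [saddle]
  have hredundant : ((saddle 0.05 14 1.136 redundant : ℚ) : ℝ) = 14 := by norm_num [saddle]
  have hfalsified : ((saddle 0.05 14 1.136 falsified : ℚ) : ℝ) = 1.136 := by norm_num [saddle]
  refine ⟨fun s => ?_, by norm_num, by norm_num, ?_, ?_⟩
  · cases s <;> norm_num [saddle]
  · calc _ ≤ 3 * (0.0053 / 1.136) ^ 2 / (0.05 : ℝ) := by
          rw [hcritical, hfalsified]
          gcongr
          exacts [div_nonneg hp.1 (by norm_num), hp.2]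
      _ ≤ _ := by norm_num
  · calc _ = 3 / (14 ^ 2 * 1.136) * ((1 - p) ^ 2 * p) + 1 / 14 ^ 3 * (1 - p) ^ 3 := by
          rw [hredundant, hfalsified]
          ring
      _ ≤ 3 / (14 ^ 2 * 1.136) * (1 * 0.0053) + 1 / 14 ^ 3 * 1 := by
          gcongr
          exacts [hp.1, hp.2]
      _ ≤ _ := by norm_num

lemma isGrowthCertificate_saddle : IsGrowthCertificate (saddle 0.05 14 1.136) 0.14 4e13 := by
  decide +kernel

theorem isFirstMomentRate_logWeight :
    IsFirstMomentRate 4.506 (fun s q => Real.exp (logWeight s q)) 26 (1 / 2 ^ 30) 16.14689 := by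
  intro p hp
  rcases le_total p 0.0053 with hle | hge
  · have hbound := isClauseBound_of_le ⟨hp.1, hle⟩
    exact ⟨_, _, _, hbound,
      isGrowthCertificate_saddle.firstMomentRate_le hbound.nonneg (by norm_num)⟩
  · obtain ⟨c, hc, hpc⟩ := exists_mem_cells ⟨hge, hp.2⟩
    exact (isCertified_of_mem_cells c hc).exists_isClauseBound hpc

end Cells

end RandomSAT

/-- Upper bound 4.506 on the random 3-SAT satisfiability threshold.
For each `n` let `m_n = ⌈4.506 n⌉`.  The probability that a uniformly random formula
`F : Fin m_n → (Fin n × Bool)³` (ordered-clauses model, `(2n)^(3 m_n)` formulae in all)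
is satisfiable tends to `0` as `n → ∞`. -/
theorem random_3SAT_threshold_upper_bound_4506 :
    Tendsto (fun n : ℕ =>
      (Nat.card {F : Fin (⌈(4.506 : ℝ) * (n : ℝ)⌉₊) → Fin 3 → Fin n × Bool //
          ∃ A : Fin n → Bool, ∀ i, ∃ j, A (F i j).1 = (F i j).2} : ℝ) /
        ((2 * (n : ℝ)) ^ (3 * ⌈(4.506 : ℝ) * (n : ℝ)⌉₊)))
      atTop (nhds 0) := by
  simpa only [RandomSAT.formulaProb_eq_card_curried_div] using
    RandomSAT.tendsto_formulaProb_isSat (by norm_num) RandomSAT.isLogWeight_logWeight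
      (by norm_num) (by norm_num) RandomSAT.isFirstMomentRate_logWeight
      RandomSAT.lt_poissonMean_logWeight
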